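/- Upper bound on Dirichlet boundary-crossing probabilities: Let m ≥ 1, b > 0, and let f : {0,…,m} → [0,b] satisfy f(0) = 0 and f(m) = b. Let α = (α_0,…,α_m) ∈ ℝ_{>0}^{m+1}, set ᾱ = Σ_{j=0}^m α_j and p̄(ℓ) = α_ℓ/ᾱ for ℓ = 0,…,m. Fix ε ∈ (0,1) and assume min(α_0, α_m) ≥ c₀·ε^{−2}. Define α⁻ = (α_0 + 1, α_1, …, α_{m−1}, α_m). Then for every μ ∈ (p̄f, b), P_{w ∼ Dir(α⁻)}( wf ≥ μ ) ≤ (1 + ε) · P_{ζ ∼ N(0,1)}( ζ ≥ √(2 ᾱ Kinf(p̄, μ, f)) ). -/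

import Mathlib

open MeasureTheory ProbabilityTheory Real Set
open scoped ENNReal

noncomputable section

/-- The absolute constant `c₀ = (2/π)(8 + 49√6/9)²`. -/
def c0 : ℝ := (2 / Real.pi) * (8 + 49 * Real.sqrt 6 / 9) ^ 2

/-- Unnormalized density of `Dir(α)` in the first `m` coordinates. -/
def dirichletDensity (m : ℕ) (α : Fin (m + 1) → ℝ) : (Fin m → ℝ) → ℝ :=
  Set.indicator {x | (∀ i, 0 ≤ x i) ∧ ∑ i, x i ≤ 1}
    (fun x => (∏ i : Fin m, x i ^ (α i.castSucc - 1)) * (1 - ∑ i, x i) ^ (α (Fin.last m) - 1))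

def dirichletBase (m : ℕ) (α : Fin (m + 1) → ℝ) : Measure (Fin m → ℝ) :=
  volume.withDensity fun x => ENNReal.ofReal (dirichletDensity m α x)

/-- The Dirichlet distribution `Dir(α)`, as the law of the vector
`(x₀, …, x_{m-1}, 1 - ∑ x_i)` on the simplex `Δ_m ⊆ ℝ^{m+1}`. -/
def dirichlet (m : ℕ) (α : Fin (m + 1) → ℝ) : Measure (Fin (m + 1) → ℝ) :=
  Measure.map (fun x : Fin m → ℝ => Fin.snoc x (1 - ∑ i, x i))
    ((dirichletBase m α Set.univ)⁻¹ • dirichletBase m α)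

/-- Kullback–Leibler divergence between finitely supported `p, q` (for `p ≪ q`). -/
def klReal {m : ℕ} (p q : Fin (m + 1) → ℝ) : ℝ :=
  ∑ i, if p i = 0 then 0 else p i * Real.log (p i / q i)

/-- `Kinf(p, μ, f) = inf { KL(p,q) : q ∈ Δ_m, qf ≥ μ }`. -/
def Kinf {m : ℕ} (p : Fin (m + 1) → ℝ) (μ : ℝ) (f : Fin (m + 1) → ℝ) : ℝ :=
  sInf {x | ∃ q ∈ stdSimplex ℝ (Fin (m + 1)),
    (∀ i, q i = 0 → p i = 0) ∧ μ ≤ ∑ i, f i * q i ∧ x = klReal p q}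

/-- `Kinf*(p, μ, f) = inf { KL(p,q) : q ∈ Δ_m, qf = μ }`. -/
def Kinfstar {m : ℕ} (p : Fin (m + 1) → ℝ) (μ : ℝ) (f : Fin (m + 1) → ℝ) : ℝ :=
  sInf {x | ∃ q ∈ stdSimplex ℝ (Fin (m + 1)),
    (∀ i, q i = 0 → p i = 0) ∧ (∑ i, f i * q i) = μ ∧ x = klReal p q}

/-- `A(p, μ, f) = sgn(μ - pf) √(2 Kinf*(p, μ, f))`. -/
def Afun {m : ℕ} (p : Fin (m + 1) → ℝ) (μ : ℝ) (f : Fin (m + 1) → ℝ) : ℝ :=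
  Real.sign (μ - ∑ ℓ, f ℓ * p ℓ) * Real.sqrt (2 * Kinfstar p μ f)



lemma lintegral_scale {m : ℕ} (h : (Fin m → ℝ) → ℝ≥0∞) (hh : Measurable h) (t : ℝ) (ht : 0 < t) :
    ∫⁻ y, h y = ENNReal.ofReal (t ^ m) * ∫⁻ x, h (t • x) := by
  have h1 := Measure.map_addHaar_smul (volume : Measure (Fin m → ℝ)) ht.ne'
  have h2 : ∫⁻ x, h (t • x) = ∫⁻ y, h y ∂(Measure.map (fun x : Fin m → ℝ => t • x) volume) := by
    rw [lintegral_map hh (measurable_const_smul t)]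
  rw [h2]
  change _ = _ * ∫⁻ y, h y ∂(Measure.map (t • ·) volume)
  rw [h1, lintegral_smul_measure, smul_eq_mul, ← mul_assoc, ← ENNReal.ofReal_mul (by positivity)]
  simp only [Module.finrank_fintype_fun_eq_card, Fintype.card_fin]
  rw [abs_of_pos (by positivity), mul_inv_cancel₀ (by positivity)]
  simp

lemma measurable_snocFun {m : ℕ} : Measurable (fun p : ℝ × (Fin m → ℝ) =>
    (Fin.snoc p.2 p.1 : Fin (m + 1) → ℝ)) := by
  rw [measurable_pi_iff]
  intro i
  refine Fin.lastCases ?_ (fun j => ?_) i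
  · simp only [Fin.snoc_last]; fun_prop
  · simp only [Fin.snoc_castSucc]; fun_prop

lemma lintegral_snoc {m : ℕ} (H : (Fin (m + 1) → ℝ) → ℝ≥0∞) (hH : Measurable H) :
    ∫⁻ g, H g = ∫⁻ t : ℝ, ∫⁻ y : Fin m → ℝ, H (Fin.snoc y (t - ∑ i, y i)) := by
  have e := (volume_preserving_piFinSuccAbove (fun _ : Fin (m + 1) => ℝ) (Fin.last m)).symm
  rw [← e.lintegral_comp hH]
  have hm : Measurable (fun p : ℝ × (Fin m → ℝ) => H (Fin.snoc p.2 p.1)) :=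
    hH.comp measurable_snocFun
  have h1 : ∀ p : ℝ × (Fin m → ℝ), (MeasurableEquiv.piFinSuccAbove (fun _ : Fin (m + 1) => ℝ)
      (Fin.last m)).symm p = Fin.snoc p.2 p.1 := by
    intro p
    simp [MeasurableEquiv.piFinSuccAbove, Fin.insertNthEquiv, ← Fin.insertNth_last']
  have h2 : ∫⁻ a : ℝ × (Fin m → ℝ), H ((MeasurableEquiv.piFinSuccAbove
      (fun _ : Fin (m + 1) => ℝ) (Fin.last m)).symm a) = ∫⁻ p : ℝ × (Fin m → ℝ), H (Fin.snoc p.2 p.1) := by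
    refine lintegral_congr fun p => ?_
    rw [h1]
  refine h2.trans ?_
  rw [Measure.volume_eq_prod, lintegral_prod_symm' _ hm]
  have h3 : ∀ y : Fin m → ℝ, ∫⁻ r : ℝ, H (Fin.snoc y r) = ∫⁻ t : ℝ, H (Fin.snoc y (t - ∑ i, y i)) := by
    intro y
    exact (lintegral_sub_right_eq_self (fun r => H (Fin.snoc y r)) (∑ i, y i)).symm
  simp only [h3]
  rw [lintegral_lintegral_swap]
  refine Measurable.aemeasurable ?_
  refine hm.comp (f := fun p : (Fin m → ℝ) × ℝ => ((p.2 - ∑ i, p.1 i, p.1) : ℝ × (Fin m → ℝ))) ?_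
  fun_prop

lemma measurable_dirichletDensity (m : ℕ) (α : Fin (m + 1) → ℝ) :
    Measurable (dirichletDensity m α) := by
  unfold dirichletDensity
  refine Measurable.indicator (by fun_prop) ?_
  have h1 : MeasurableSet {x : Fin m → ℝ | ∀ i, 0 ≤ x i} := by
    rw [Set.ofPred_forall]
    exact MeasurableSet.iInter fun i => measurableSet_le measurable_const (measurable_pi_apply i)
  exact h1.inter (measurableSet_le
    (Finset.measurable_sum _ fun i _ => measurable_pi_apply i) measurable_const)

/-- product gamma density -/
def gprod {ι : Type*} [Fintype ι] (β : ι → ℝ) (g : ι → ℝ) : ℝ := ∏ i, gammaPDFReal (β i) 1 (g i)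

lemma measurable_gprod {ι : Type*} [Fintype ι] (β : ι → ℝ) : Measurable (gprod β) := by
  unfold gprod
  exact Finset.measurable_prod _ fun i _ => (measurable_gammaPDFReal _ _).comp (measurable_pi_apply i)

lemma gprod_nonneg {ι : Type*} [Fintype ι] (β : ι → ℝ) (hβ : ∀ i, 0 < β i) (g : ι → ℝ) :
    0 ≤ gprod β g :=
  Finset.prod_nonneg fun i _ => gammaPDFReal_nonneg (hβ i) one_pos _

lemma gprod_pos_simplex {m : ℕ} (β : Fin (m + 1) → ℝ) (hβ : ∀ i, 0 < β i) (t : ℝ) (ht : 0 < t)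
    (x : Fin m → ℝ) :
    t ^ m * gprod β (Fin.snoc (t • x) (t - ∑ i, (t • x) i)) =
      gammaPDFReal (∑ i, β i) 1 t * ((Gamma (∑ i, β i) / ∏ i, Gamma (β i)) * dirichletDensity m β x) := by
  have hB : 0 < ∑ i, β i := Finset.sum_pos (fun i _ => hβ i) Finset.univ_nonempty
  have hs : t - ∑ i, (t • x) i = t * (1 - ∑ i, x i) := by
    simp [← Finset.mul_sum]; ring
  rw [hs]
  unfold gprod dirichletDensity
  by_cases hx : x ∈ {x : Fin m → ℝ | (∀ i, 0 ≤ x i) ∧ ∑ i, x i ≤ 1}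
  · rw [Set.indicator_of_mem hx]
    obtain ⟨hx1, hx2⟩ := hx
    have hl : 0 ≤ 1 - ∑ i, x i := by linarith
    rw [Fin.prod_univ_castSucc, Fin.prod_univ_castSucc (fun i => Gamma (β i))]
    simp only [Fin.snoc_castSucc, Fin.snoc_last, Pi.smul_apply, smul_eq_mul]
    have e1 : ∀ i : Fin m, gammaPDFReal (β i.castSucc) 1 (t * x i) =
        (Gamma (β i.castSucc))⁻¹ * (x i ^ (β i.castSucc - 1)) * (t ^ (β i.castSucc - 1) * exp (- (t * x i))) := by
      intro i
      have h0 : 0 ≤ t * x i := mul_nonneg ht.le (hx1 i)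
      rw [gammaPDFReal, if_pos h0, Real.mul_rpow ht.le (hx1 i)]
      simp; ring
    have e2 : gammaPDFReal (β (Fin.last m)) 1 (t * (1 - ∑ i, x i)) =
        (Gamma (β (Fin.last m)))⁻¹ * ((1 - ∑ i, x i) ^ (β (Fin.last m) - 1)) *
          (t ^ (β (Fin.last m) - 1) * exp (- (t * (1 - ∑ i, x i)))) := by
      have h0 : 0 ≤ t * (1 - ∑ i, x i) := mul_nonneg ht.le hl
      rw [gammaPDFReal, if_pos h0, Real.mul_rpow ht.le hl]
      simp; ring
    have e3 : gammaPDFReal (∑ i, β i) 1 t = (Gamma (∑ i, β i))⁻¹ * (t ^ (∑ i, β i - 1) * exp (-t)) := by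
      rw [gammaPDFReal, if_pos ht.le]
      simp; ring
    rw [e2, e3]
    simp only [e1, Finset.prod_mul_distrib, Finset.prod_inv_distrib]
    have e4 : t ^ m * ((∏ i : Fin m, t ^ (β i.castSucc - 1)) * t ^ (β (Fin.last m) - 1)) =
        t ^ (∑ i, β i - 1) := by
      rw [← Real.rpow_sum_of_pos ht, ← Real.rpow_natCast, ← Real.rpow_add ht, ← Real.rpow_add ht,
        Fin.sum_univ_castSucc]
      congr 1
      simp
      ring
    have e5 : (∏ i : Fin m, exp (-(t * x i))) * exp (-(t * (1 - ∑ i, x i))) = exp (-t) := by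
      rw [← Real.exp_sum, ← Real.exp_add]
      congr 1
      rw [Finset.sum_neg_distrib, ← Finset.mul_sum]; ring
    have hG : Gamma (∑ i, β i) ≠ 0 := (Gamma_pos_of_pos hB).ne'
    rw [← e4, ← e5]
    field_simp
  · rw [Set.indicator_of_notMem hx]
    simp only [Set.mem_ofPred_eq, not_and_or, not_forall, not_le] at hx
    rw [mul_zero, mul_zero]
    refine mul_eq_zero_of_right _ ?_
    rcases hx with ⟨i, hi⟩ | hx
    · refine Finset.prod_eq_zero (Finset.mem_univ i.castSucc) ?_
      rw [Fin.snoc_castSucc, gammaPDFReal, if_neg]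
      simpa using mul_neg_of_pos_of_neg ht hi
    · refine Finset.prod_eq_zero (Finset.mem_univ (Fin.last m)) ?_
      rw [Fin.snoc_last, gammaPDFReal, if_neg]
      simpa using mul_neg_of_pos_of_neg ht (by linarith)

lemma gprod_neg_simplex {m : ℕ} (β : Fin (m + 1) → ℝ) (t : ℝ) (ht : t < 0) (y : Fin m → ℝ) :
    gprod β (Fin.snoc y (t - ∑ i, y i)) = 0 := by
  by_cases h : ∀ i, 0 ≤ y i
  · refine Finset.prod_eq_zero (Finset.mem_univ (Fin.last m)) ?_
    rw [Fin.snoc_last, gammaPDFReal, if_neg]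
    have := Finset.sum_nonneg fun i (_ : i ∈ Finset.univ) => h i
    linarith
  · push Not at h
    obtain ⟨i, hi⟩ := h
    refine Finset.prod_eq_zero (Finset.mem_univ i.castSucc) ?_
    rw [Fin.snoc_castSucc, gammaPDFReal, if_neg]
    linarith

lemma gamma_dirichlet_link {m : ℕ} (β : Fin (m + 1) → ℝ) (hβ : ∀ i, 0 < β i)
    (Φ : (Fin (m + 1) → ℝ) → ℝ≥0∞) (hΦ : Measurable Φ) :
    ∫⁻ g, Φ g * ENNReal.ofReal (gprod β g) =
      ∫⁻ t in Ioi (0 : ℝ), ENNReal.ofReal (gammaPDFReal (∑ i, β i) 1 t) *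
        (ENNReal.ofReal (Gamma (∑ i, β i) / ∏ i, Gamma (β i)) *
          ∫⁻ x, Φ (t • Fin.snoc x (1 - ∑ i, x i)) ∂(dirichletBase m β)) := by
  have hB : 0 < ∑ i, β i := Finset.sum_pos (fun i _ => hβ i) Finset.univ_nonempty
  have hc : 0 ≤ Gamma (∑ i, β i) / ∏ i, Gamma (β i) :=
    div_nonneg (Gamma_pos_of_pos hB).le (Finset.prod_nonneg fun i _ => (Gamma_pos_of_pos (hβ i)).le)
  have hmW : Measurable fun g => Φ g * ENNReal.ofReal (gprod β g) :=
    hΦ.mul (measurable_gprod β).ennreal_ofReal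
  rw [lintegral_snoc _ hmW]
  rw [← lintegral_indicator measurableSet_Ioi]
  refine lintegral_congr_ae ?_
  filter_upwards [Measure.ae_ne volume (0 : ℝ)] with t ht
  rcases lt_or_gt_of_ne ht with ht | ht
  · rw [Set.indicator_of_notMem (by simpa using ht.le)]
    simp [gprod_neg_simplex β t ht]
  · rw [Set.indicator_of_mem (by simpa using ht)]
    have hms : Measurable fun y : Fin m → ℝ => (Fin.snoc y (t - ∑ i, y i) : Fin (m + 1) → ℝ) :=
      measurable_snocFun.comp (f := fun y : Fin m → ℝ => (t - ∑ i, y i, y)) (by fun_prop)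
    have hms1 : Measurable fun y : Fin m → ℝ => (Fin.snoc y (1 - ∑ i, y i) : Fin (m + 1) → ℝ) :=
      measurable_snocFun.comp (f := fun y : Fin m → ℝ => (1 - ∑ i, y i, y)) (by fun_prop)
    have hA : Measurable fun y : Fin m → ℝ => Φ (Fin.snoc y (t - ∑ i, y i)) *
        ENNReal.ofReal (gprod β (Fin.snoc y (t - ∑ i, y i))) := hmW.comp hms
    have hA' : Measurable fun x : Fin m → ℝ => Φ (Fin.snoc (t • x) (t - ∑ i, (t • x) i)) *
        ENNReal.ofReal (gprod β (Fin.snoc (t • x) (t - ∑ i, (t • x) i))) :=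
      hA.comp (measurable_const_smul t)
    have hΦ1 : Measurable fun x : Fin m → ℝ => Φ (t • Fin.snoc x (1 - ∑ i, x i)) :=
      hΦ.comp (hms1.const_smul t)
    rw [lintegral_scale _ hA t ht, dirichletBase, lintegral_withDensity_eq_lintegral_mul _
      (measurable_dirichletDensity m β).ennreal_ofReal hΦ1]
    have hm2 := (measurable_dirichletDensity m β).ennreal_ofReal.mul hΦ1
    rw [← lintegral_const_mul _ hm2, ← lintegral_const_mul _ (hm2.const_mul _),
      ← lintegral_const_mul _ hA']
    refine lintegral_congr fun x => ?_
    have hsn : (Fin.snoc (t • x) (t - ∑ i, (t • x) i) : Fin (m + 1) → ℝ) =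
        t • Fin.snoc x (1 - ∑ i, x i) := by
      ext i
      refine Fin.lastCases ?_ (fun j => ?_) i
      · simp [← Finset.mul_sum]; ring
      · simp
    have key := gprod_pos_simplex β hβ t ht x
    have hd : 0 ≤ dirichletDensity m β x := by
      unfold dirichletDensity
      refine Set.indicator_nonneg (fun x hx => ?_) x
      exact mul_nonneg (Finset.prod_nonneg fun i _ => Real.rpow_nonneg (hx.1 i) _)
        (Real.rpow_nonneg (by linarith [hx.2]) _)
    have key2 := congrArg ENNReal.ofReal key
    rw [ENNReal.ofReal_mul (by positivity), ENNReal.ofReal_mul (gammaPDFReal_nonneg hB one_pos _),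
      ENNReal.ofReal_mul hc] at key2
    simp only [Pi.mul_apply]
    rw [mul_left_comm, key2, hsn]
    ring

lemma integral_gammaPDFReal_exp (β : ℝ) (hβ : 0 < β) (c : ℝ) (hc : c < 1) :
    Integrable (fun y => gammaPDFReal β 1 y * exp (c * y)) ∧
    ∫ y, gammaPDFReal β 1 y * exp (c * y) = (1 - c) ^ (-β) := by
  have h1c : 0 < 1 - c := by linarith
  have hG := Gamma_pos_of_pos hβ
  have e : (fun y => gammaPDFReal β 1 y * exp (c * y)) =
      Set.indicator (Ici 0) (fun y => (Gamma β)⁻¹ * (y ^ (β - 1) * exp (-((1 - c) * y)))) := by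
    ext y
    by_cases hy : 0 ≤ y
    · rw [Set.indicator_of_mem (by simpa using hy), gammaPDFReal, if_pos hy]
      have : exp (-((1 - c) * y)) = exp (-(1 * y)) * exp (c * y) := by
        rw [← Real.exp_add]; congr 1; ring
      rw [this]; simp; ring
    · rw [Set.indicator_of_notMem (by simpa using hy), gammaPDFReal, if_neg hy, zero_mul]
  rw [e]
  have hi : IntegrableOn (fun y : ℝ => y ^ (β - 1) * exp (-((1 - c) * y))) (Ici 0) := by
    rw [integrableOn_Ici_iff_integrableOn_Ioi]
    have := integrableOn_rpow_mul_exp_neg_mul_rpow (p := 1) (s := β - 1) (b := 1 - c)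
      (by linarith) one_pos h1c
    simpa only [Real.rpow_one, neg_mul] using this
  refine ⟨?_, ?_⟩
  · rw [integrable_indicator_iff measurableSet_Ici]
    exact hi.const_mul _
  · rw [integral_indicator measurableSet_Ici, integral_Ici_eq_integral_Ioi, integral_const_mul,
      Real.integral_rpow_mul_exp_neg_mul_Ioi hβ h1c, Real.rpow_neg h1c.le, one_div,
      Real.inv_rpow h1c.le]
    field_simp

lemma integral_gammaPDFReal_cexp (β : ℝ) (hβ : 0 < β) (z : ℂ) (hz : z.re < 1) :
    ∫ y, (gammaPDFReal β 1 y : ℂ) * Complex.exp (z * y) = (1 - z) ^ (-β : ℂ) := by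
  have hInt : ∀ c : ℝ, c < 1 → Integrable (fun y => exp (c * id y)) (gammaMeasure β 1) := by
    intro c hc
    rw [gammaMeasure, integrable_withDensity_iff_integrable_smul']
    · refine (integral_gammaPDFReal_exp β hβ c hc).1.congr (Filter.Eventually.of_forall fun y => ?_)
      simp [gammaPDF, ENNReal.toReal_ofReal (gammaPDFReal_nonneg hβ one_pos _)]
    · exact (measurable_gammaPDFReal _ _).ennreal_ofReal
    · exact Filter.Eventually.of_forall fun y => ENNReal.ofReal_lt_top
  have hcm : ∀ z : ℂ, complexMGF id (gammaMeasure β 1) z =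
      ∫ y, (gammaPDFReal β 1 y : ℂ) * Complex.exp (z * y) := by
    intro z
    rw [complexMGF, gammaMeasure, integral_withDensity_eq_integral_toReal_smul]
    · refine integral_congr_ae (Filter.Eventually.of_forall fun y => ?_)
      simp [gammaPDF, ENNReal.toReal_ofReal (gammaPDFReal_nonneg hβ one_pos _)]
    · exact (measurable_gammaPDFReal _ _).ennreal_ofReal
    · exact Filter.Eventually.of_forall fun y => ENNReal.ofReal_lt_top
  rw [← hcm]
  set Ω : Set ℂ := {z | z.re < 1}
  have hΩc : Convex ℝ Ω := convex_halfSpace_re_lt 1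
  have hsub : Iio (1 : ℝ) ⊆ interior (integrableExpSet id (gammaMeasure β 1)) := by
    refine interior_maximal (fun c hc => ?_) isOpen_Iio
    exact hInt c hc
  have hF : AnalyticOnNhd ℂ (complexMGF id (gammaMeasure β 1)) Ω :=
    analyticOnNhd_complexMGF.mono fun z hz => hsub hz
  have hslit : ∀ z ∈ Ω, 1 - z ∈ Complex.slitPlane := by
    intro z hz
    left
    simp
    exact hz
  have hGa : AnalyticOnNhd ℂ (fun z : ℂ => (1 - z) ^ (-β : ℂ)) Ω := by
    intro z hz
    exact AnalyticAt.cpow (by fun_prop) (by fun_prop) (hslit z hz)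
  refine hF.eqOn_of_preconnected_of_frequently_eq hGa hΩc.isPreconnected (z₀ := 0) (by simp [Ω]) ?_ hz
  have hreal : ∀ c : ℝ, c < 1 → complexMGF id (gammaMeasure β 1) (c : ℂ) = (1 - (c : ℂ)) ^ (-β : ℂ) := by
    intro c hc
    rw [hcm]
    have h2 := (integral_gammaPDFReal_exp β hβ c hc).2
    have h3 : ∫ y, (gammaPDFReal β 1 y : ℂ) * Complex.exp (c * y) =
        ((∫ y, gammaPDFReal β 1 y * exp (c * y) : ℝ) : ℂ) := by
      rw [← integral_complex_ofReal]
      refine integral_congr_ae (Filter.Eventually.of_forall fun y => ?_)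
      simp
    rw [h3, h2, Complex.ofReal_cpow (by linarith)]
    simp
  have hs : Filter.Tendsto (fun n : ℕ => ((-(1 / ((n : ℝ) + 1)) : ℝ) : ℂ)) Filter.atTop (nhdsWithin 0 {0}ᶜ) := by
    rw [tendsto_nhdsWithin_iff]
    constructor
    · have := (tendsto_one_div_add_atTop_nhds_zero_nat (𝕜 := ℝ)).neg
      rw [neg_zero] at this
      exact_mod_cast (Complex.continuous_ofReal.tendsto 0).comp this
    · refine Filter.Eventually.of_forall fun n => ?_
      have : (0:ℝ) < 1 / ((n : ℝ) + 1) := by positivity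
      simp only [mem_compl_iff, mem_singleton_iff, Complex.ofReal_eq_zero]
      linarith
  refine hs.frequently (Filter.Frequently.of_forall fun n => ?_)
  refine hreal _ ?_
  have : (0:ℝ) < 1 / ((n : ℝ) + 1) := by positivity
  linarith

lemma smoothing_eq {ι : Type*} [Fintype ι] (β c : ι → ℝ) (hβ : ∀ i, 0 < β i) (l : ℝ)
    (hl : ∀ i, l * c i < 1) (τ : ℝ) (hτ : 0 < τ) :
    Integrable (fun g : ι → ℝ => exp (l * (∑ i, c i * g i) - (∑ i, c i * g i) ^ 2 / (2 * τ ^ 2)) * gprod β g) ∧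
    ((∫ g : ι → ℝ, exp (l * (∑ i, c i * g i) - (∑ i, c i * g i) ^ 2 / (2 * τ ^ 2)) * gprod β g : ℝ) : ℂ) =
      ∫ s : ℝ, ((τ / √(2 * π) : ℝ) : ℂ) * (Complex.exp (-(τ ^ 2 / 2 : ℝ) * (s : ℂ) ^ 2) *
        ∏ i, (1 - ((l : ℂ) + s * Complex.I) * c i) ^ (-β i : ℂ)) := by
  set S : (ι → ℝ) → ℝ := fun g => ∑ i, c i * g i with hS
  have hSm : Measurable S := by
    simp only [hS]; exact Finset.measurable_sum _ fun i _ => (measurable_pi_apply i).const_mul _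
  -- integrable tilted density
  have hK : Integrable (fun g : ι → ℝ => ∏ i, (gammaPDFReal (β i) 1 (g i) * exp (l * c i * g i))) :=
    Integrable.fintype_prod (μ := fun _ => volume)
      (f := fun i y => gammaPDFReal (β i) 1 y * exp (l * c i * y))
      fun i => (integral_gammaPDFReal_exp (β i) (hβ i) (l * c i) (hl i)).1
  have hKe : ∀ g : ι → ℝ, ∏ i, (gammaPDFReal (β i) 1 (g i) * exp (l * c i * g i)) =
      exp (l * S g) * gprod β g := by
    intro g
    rw [Finset.prod_mul_distrib, ← Real.exp_sum, mul_comm, gprod]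
    congr 2
    simp only [hS, Finset.mul_sum]
    exact Finset.sum_congr rfl fun i _ => by ring
  have hK' : Integrable (fun g : ι → ℝ => exp (l * S g) * gprod β g) :=
    hK.congr (Filter.Eventually.of_forall hKe)
  have hInt : Integrable (fun g : ι → ℝ => exp (l * S g - S g ^ 2 / (2 * τ ^ 2)) * gprod β g) := by
    have := hK'.bdd_mul (f := fun g => exp (-(S g ^ 2 / (2 * τ ^ 2)))) (c := 1)
      (by apply Measurable.aestronglyMeasurable; fun_prop)
      (Filter.Eventually.of_forall fun g => by
        rw [Real.norm_eq_abs, abs_of_pos (Real.exp_pos _), Real.exp_le_one_iff]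
        have : 0 ≤ S g ^ 2 / (2 * τ ^ 2) := by positivity
        linarith)
    refine this.congr (Filter.Eventually.of_forall fun g => ?_)
    simp only
    rw [sub_eq_add_neg, Real.exp_add]; ring
  refine ⟨hInt, ?_⟩
  have hb : 0 < ((τ ^ 2 / 2 : ℝ) : ℂ).re := by rw [Complex.ofReal_re]; positivity
  -- pointwise Fourier representation
  have hpt : ∀ g : ι → ℝ, ((exp (l * S g - S g ^ 2 / (2 * τ ^ 2)) * gprod β g : ℝ) : ℂ) =
      ∫ s : ℝ, ((τ / √(2 * π) : ℝ) : ℂ) * (Complex.exp (-(τ ^ 2 / 2 : ℝ) * (s : ℂ) ^ 2) *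
        (Complex.exp (Complex.I * S g * s) * (exp (l * S g) * gprod β g : ℝ))) := by
    intro g
    have hF := fourierIntegral_gaussian hb (S g : ℂ)
    have e1 : ∀ s : ℝ, ((τ / √(2 * π) : ℝ) : ℂ) * (Complex.exp (-(τ ^ 2 / 2 : ℝ) * (s : ℂ) ^ 2) *
        (Complex.exp (Complex.I * S g * s) * (exp (l * S g) * gprod β g : ℝ))) =
        (((τ / √(2 * π) : ℝ) : ℂ) * (exp (l * S g) * gprod β g : ℝ)) *
        (Complex.exp (Complex.I * S g * s) * Complex.exp (-((τ ^ 2 / 2 : ℝ) : ℂ) * (s : ℂ) ^ 2)) := by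
      intro s; ring
    simp only [e1]
    rw [integral_const_mul, hF]
    have e2 : ((π : ℂ) / ((τ ^ 2 / 2 : ℝ) : ℂ)) ^ (1 / 2 : ℂ) = ((√(2 * π) / τ : ℝ) : ℂ) := by
      rw [← Complex.ofReal_div]
      have : (1 / 2 : ℂ) = ((1 / 2 : ℝ) : ℂ) := by norm_num
      rw [this, ← Complex.ofReal_cpow (by positivity), ← Real.sqrt_eq_rpow]
      congr 1
      rw [show π / (τ ^ 2 / 2) = (2 * π) / τ ^ 2 by field_simp, Real.sqrt_div (by positivity),
        Real.sqrt_sq hτ.le]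
    have e3 : Complex.exp (-(S g : ℂ) ^ 2 / (4 * ((τ ^ 2 / 2 : ℝ) : ℂ))) =
        ((exp (-(S g ^ 2 / (2 * τ ^ 2))) : ℝ) : ℂ) := by
      rw [Complex.ofReal_exp]
      congr 1
      push_cast
      field_simp
      ring
    rw [e2, e3, ← Complex.ofReal_mul, ← Complex.ofReal_mul, ← Complex.ofReal_mul]
    congr 1
    rw [sub_eq_add_neg, Real.exp_add]
    have : 0 < √(2 * π) := by positivity
    field_simp
  rw [← integral_complex_ofReal]
  refine (integral_congr_ae (Filter.Eventually.of_forall hpt)).trans ?_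
  rw [integral_integral_swap]
  · refine integral_congr_ae (Filter.Eventually.of_forall fun s => ?_)
    simp only
    rw [integral_const_mul, integral_const_mul]
    congr 2
    have e4 : ∀ g : ι → ℝ, Complex.exp (Complex.I * S g * s) * ((exp (l * S g) * gprod β g : ℝ) : ℂ) =
        ∏ i, ((gammaPDFReal (β i) 1 (g i) : ℂ) *
          Complex.exp ((((l : ℂ) + s * Complex.I) * c i) * (g i : ℂ))) := by
      intro g
      rw [Finset.prod_mul_distrib, ← Complex.exp_sum, gprod]
      push_cast
      rw [← mul_assoc, ← Complex.exp_add, mul_comm]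
      congr 2
      simp only [hS]
      push_cast
      rw [Finset.mul_sum, Finset.mul_sum, Finset.sum_mul, ← Finset.sum_add_distrib]
      exact Finset.sum_congr rfl fun i _ => by ring
    simp only [e4]
    rw [integral_fintype_prod_volume_eq_prod (fun i (y : ℝ) => (gammaPDFReal (β i) 1 y : ℂ) *
          Complex.exp ((((l : ℂ) + s * Complex.I) * c i) * (y : ℂ)))]
    refine Finset.prod_congr rfl fun i _ => ?_
    refine integral_gammaPDFReal_cexp _ (hβ i) _ ?_
    simpa using hl i
  · have hg : Integrable (fun s : ℝ => Complex.exp (-((τ ^ 2 / 2 : ℝ) : ℂ) * (s : ℂ) ^ 2)) :=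
      integrable_cexp_neg_mul_sq hb
    have hKC : Integrable (fun g : ι → ℝ => ((exp (l * S g) * gprod β g : ℝ) : ℂ)) := hK'.ofReal
    have h1 := hKC.mul_prod hg
    have h2 := (h1.bdd_mul (f := fun p : (ι → ℝ) × ℝ => Complex.exp (Complex.I * S p.1 * p.2)) (c := 1)
      (by
        apply Measurable.aestronglyMeasurable
        refine Complex.measurable_exp.comp ?_
        refine Measurable.mul ?_ (Complex.measurable_ofReal.comp measurable_snd)
        exact ((Complex.measurable_ofReal.comp (hSm.comp measurable_fst))).const_mul _)
      (Filter.Eventually.of_forall fun p => by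
        have : Complex.I * S p.1 * p.2 = ((S p.1 * p.2 : ℝ) : ℂ) * Complex.I := by push_cast; ring
        rw [this, Complex.norm_exp_ofReal_mul_I])).const_mul ((τ / √(2 * π) : ℝ) : ℂ)
    refine h2.congr (Filter.Eventually.of_forall fun p => ?_)
    simp only [Function.uncurry]
    ring

lemma smoothing_le {ι : Type*} [Fintype ι] (β c : ι → ℝ) (hβ : ∀ i, 0 < β i) (l : ℝ)
    (hl : ∀ i, l * c i < 1) (τ : ℝ) (hτ : 0 < τ) :
    ∫⁻ g : ι → ℝ, ENNReal.ofReal ((√(2 * π) * τ)⁻¹ *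
        exp (l * (∑ i, c i * g i) - (∑ i, c i * g i) ^ 2 / (2 * τ ^ 2))) * ENNReal.ofReal (gprod β g) ≤
      ENNReal.ofReal (1 / (2 * π)) *
        ∫⁻ s : ℝ, ENNReal.ofReal (∏ i, ‖1 - ((l : ℂ) + s * Complex.I) * c i‖ ^ (-β i)) := by
  obtain ⟨hInt, heq⟩ := smoothing_eq β c hβ l hl τ hτ
  have hsp : 0 < √(2 * π) := by positivity
  have h1 : ∀ g : ι → ℝ, ENNReal.ofReal ((√(2 * π) * τ)⁻¹ *
        exp (l * (∑ i, c i * g i) - (∑ i, c i * g i) ^ 2 / (2 * τ ^ 2))) * ENNReal.ofReal (gprod β g) =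
      ENNReal.ofReal ((√(2 * π) * τ)⁻¹ *
        (exp (l * (∑ i, c i * g i) - (∑ i, c i * g i) ^ 2 / (2 * τ ^ 2)) * gprod β g)) := by
    intro g
    rw [← ENNReal.ofReal_mul (by positivity), mul_assoc]
  simp only [h1]
  rw [← ofReal_integral_eq_lintegral_ofReal (hInt.const_mul _)
    (Filter.Eventually.of_forall fun g => by
      have := gprod_nonneg β hβ g
      simp only [Pi.zero_apply]
      positivity), integral_const_mul, ENNReal.ofReal_mul (by positivity)]
  have h2 : 0 ≤ ∫ g : ι → ℝ, exp (l * (∑ i, c i * g i) - (∑ i, c i * g i) ^ 2 / (2 * τ ^ 2)) * gprod β g :=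
    integral_nonneg fun g => mul_nonneg (Real.exp_pos _).le (gprod_nonneg β hβ g)
  have h3 : ENNReal.ofReal (∫ g : ι → ℝ, exp (l * (∑ i, c i * g i) - (∑ i, c i * g i) ^ 2 / (2 * τ ^ 2)) *
      gprod β g) ≤ ENNReal.ofReal (τ / √(2 * π)) *
        ∫⁻ s : ℝ, ENNReal.ofReal (∏ i, ‖1 - ((l : ℂ) + s * Complex.I) * c i‖ ^ (-β i)) := by
    rw [← Real.norm_of_nonneg h2, ← Complex.norm_real, heq, ofReal_norm]
    refine (enorm_integral_le_lintegral_enorm _).trans ?_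
    rw [← lintegral_const_mul' _ _ ENNReal.ofReal_ne_top]
    refine lintegral_mono fun s => ?_
    rw [← ofReal_norm, ← ENNReal.ofReal_mul (by positivity)]
    refine ENNReal.ofReal_le_ofReal ?_
    rw [norm_mul, norm_mul, norm_prod, Complex.norm_real, Real.norm_of_nonneg (by positivity)]
    have e5 : ‖Complex.exp (-((τ ^ 2 / 2 : ℝ) : ℂ) * (s : ℂ) ^ 2)‖ ≤ 1 := by
      have : -((τ ^ 2 / 2 : ℝ) : ℂ) * (s : ℂ) ^ 2 = ((-(τ ^ 2 / 2 * s ^ 2) : ℝ) : ℂ) := by push_cast; ring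
      rw [this, ← Complex.ofReal_exp, Complex.norm_real, Real.norm_of_nonneg (Real.exp_pos _).le,
        Real.exp_le_one_iff]
      have : 0 ≤ τ ^ 2 / 2 * s ^ 2 := by positivity
      linarith
    have e6 : ∀ i, ‖(1 - ((l : ℂ) + s * Complex.I) * c i) ^ (-β i : ℂ)‖ =
        ‖1 - ((l : ℂ) + s * Complex.I) * c i‖ ^ (-β i) := by
      intro i
      rw [← Complex.ofReal_neg, Complex.norm_cpow_real]
    simp only [e6]
    refine mul_le_mul_of_nonneg_left ?_ (by positivity)
    refine mul_le_of_le_one_left (Finset.prod_nonneg fun i _ => by positivity) e5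
  refine (mul_le_mul_right h3 _).trans ?_
  rw [← mul_assoc, ← ENNReal.ofReal_mul (by positivity)]
  refine le_of_eq ?_
  congr 2
  rw [show (2 * π) = √(2 * π) * √(2 * π) from (Real.mul_self_sqrt (by positivity)).symm]
  rw [Real.sqrt_mul_self hsp.le]
  field_simp

lemma student_integral (A : ℝ) (hA : 0 < A) (k : ℝ) (hk : 1 / 2 < k) :
    ∫⁻ s : ℝ, ENNReal.ofReal ((1 + A ^ 2 * s ^ 2) ^ (-k)) =
      ENNReal.ofReal (√π / A * (Gamma (k - 1 / 2) / Gamma k)) := by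
  have hk0 : 0 < k := by linarith
  have hk1 : 0 < k - 1 / 2 := by linarith
  have hG := Gamma_pos_of_pos hk0
  have hG1 := Gamma_pos_of_pos hk1
  have h1 : ∀ s : ℝ, ENNReal.ofReal ((1 + A ^ 2 * s ^ 2) ^ (-k)) =
      ∫⁻ y : ℝ, ENNReal.ofReal (gammaPDFReal k 1 y * exp (-(A ^ 2 * s ^ 2) * y)) := by
    intro s
    have hc : -(A ^ 2 * s ^ 2) < 1 := by nlinarith [sq_nonneg (A * s)]
    obtain ⟨hi, he⟩ := integral_gammaPDFReal_exp k hk0 (-(A ^ 2 * s ^ 2)) hc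
    rw [← ofReal_integral_eq_lintegral_ofReal hi (Filter.Eventually.of_forall fun y =>
      mul_nonneg (gammaPDFReal_nonneg hk0 one_pos _) (Real.exp_pos _).le), he]
    congr 2; ring
  simp only [h1]
  rw [lintegral_lintegral_swap]
  swap
  · apply Measurable.aemeasurable
    apply Measurable.ennreal_ofReal
    refine ((measurable_gammaPDFReal k 1).comp measurable_snd).mul ?_
    fun_prop
  have h2 : ∀ᵐ y : ℝ, ∫⁻ s : ℝ, ENNReal.ofReal (gammaPDFReal k 1 y * exp (-(A ^ 2 * s ^ 2) * y)) =
      ENNReal.ofReal (√π / A * (Gamma (k - 1 / 2) / Gamma k)) * gammaPDF (k - 1 / 2) 1 y := by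
    filter_upwards [Measure.ae_ne volume (0 : ℝ)] with y hy
    rcases lt_or_gt_of_ne hy with hy | hy
    · rw [gammaPDF_of_neg hy]
      simp [gammaPDFReal, not_le.mpr hy]
    · have hyA : 0 < A ^ 2 * y := by positivity
      have e1 : ∀ s : ℝ, ENNReal.ofReal (gammaPDFReal k 1 y * exp (-(A ^ 2 * s ^ 2) * y)) =
          ENNReal.ofReal (gammaPDFReal k 1 y) * ENNReal.ofReal (exp (-(A ^ 2 * y) * s ^ 2)) := by
        intro s
        rw [← ENNReal.ofReal_mul (gammaPDFReal_nonneg hk0 one_pos _)]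
        congr 3; ring
      simp only [e1]
      rw [lintegral_const_mul' _ _ ENNReal.ofReal_ne_top,
        ← ofReal_integral_eq_lintegral_ofReal (integrable_exp_neg_mul_sq hyA)
        (Filter.Eventually.of_forall fun s => (Real.exp_pos _).le), integral_gaussian,
        ← ENNReal.ofReal_mul (gammaPDFReal_nonneg hk0 one_pos _), gammaPDF,
        ← ENNReal.ofReal_mul (by positivity)]
      congr 1
      rw [gammaPDFReal, gammaPDFReal, if_pos hy.le, if_pos hy.le, Real.sqrt_div (by positivity),
        Real.sqrt_mul (by positivity), Real.sqrt_sq hA.le,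
        show k - 1 / 2 - 1 = (k - 1) - 1 / 2 by ring, Real.rpow_sub hy (k - 1) (1 / 2), ← Real.sqrt_eq_rpow]
      have := Real.sqrt_pos.mpr hy
      simp only [Real.one_rpow]
      generalize Gamma (k - 1 / 2) = G1 at hG1 ⊢
      field_simp
  rw [lintegral_congr_ae h2, lintegral_const_mul' _ _ ENNReal.ofReal_ne_top,
    lintegral_gammaPDF_eq_one hk1 one_pos, mul_one]

lemma gamma_ratio (k : ℝ) (hk : 1 / 2 < k) :
    Gamma (k - 1 / 2) / Gamma k ≤ √k / (k - 1 / 2) := by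
  have hk0 : 0 < k := by linarith
  have hk1 : 0 < k - 1 / 2 := by linarith
  have hG := Gamma_pos_of_pos hk0
  have hG1 := Gamma_pos_of_pos hk1
  have h1 : Gamma (k + 1 / 2) = (k - 1 / 2) * Gamma (k - 1 / 2) := by
    rw [← Real.Gamma_add_one hk1.ne']; congr 1; ring
  have h2 := Real.Gamma_mul_add_mul_le_rpow_Gamma_mul_rpow_Gamma hk0 (by linarith : 0 < k + 1)
    (by norm_num : (0:ℝ) < 1 / 2) (by norm_num : (0:ℝ) < 1 / 2) (by norm_num)
  rw [show 1 / 2 * k + 1 / 2 * (k + 1) = k + 1 / 2 by ring, Real.Gamma_add_one hk0.ne',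
    ← Real.sqrt_eq_rpow, ← Real.sqrt_eq_rpow, Real.sqrt_mul hk0.le, mul_left_comm,
    Real.mul_self_sqrt hG.le, h1] at h2
  rw [div_le_div_iff₀ hG hk1]
  linarith

lemma student_bound (A : ℝ) (hA : 0 < A) (V ε : ℝ) (hε0 : 0 < ε) (hε : ε < 1)
    (hV : 8 / ε ^ 2 ≤ V / A ^ 2) :
    ∫⁻ s : ℝ, ENNReal.ofReal ((1 + A ^ 2 * s ^ 2) ^ (-(V / A ^ 2 / 2))) ≤
      ENNReal.ofReal ((1 + ε) * √(2 * π / V)) := by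
  set n := V / A ^ 2 with hn
  have hε2 : 8 / ε ≤ 8 / ε ^ 2 := by
    apply div_le_div_of_nonneg_left (by norm_num) (by positivity); nlinarith
  have h8 : 8 ≤ ε * n := by
    have := hε2.trans hV
    rw [div_le_iff₀ hε0] at this; linarith
  have hn8 : 8 ≤ n := by nlinarith
  have hk : 1 / 2 < n / 2 := by linarith
  rw [student_integral A hA _ hk]
  refine ENNReal.ofReal_le_ofReal ?_
  have h1 := gamma_ratio _ hk
  have hVe : V = n * A ^ 2 := by rw [hn]; field_simp
  have h2 : √(2 * π / V) = √π / (A * √(n / 2)) := by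
    rw [hVe, show 2 * π / (n * A ^ 2) = π / (A ^ 2 * (n / 2)) by field_simp,
      Real.sqrt_div (by positivity), Real.sqrt_mul (by positivity), Real.sqrt_sq hA.le]
  have hs : 0 < √(n / 2) := by positivity
  have hs2 : √(n / 2) * √(n / 2) = n / 2 := Real.mul_self_sqrt (by positivity)
  rw [h2]
  have h3 : √(n / 2) / (n / 2 - 1 / 2) ≤ (1 + ε) / √(n / 2) := by
    rw [div_le_div_iff₀ (by linarith) hs, hs2]
    nlinarith
  calc √π / A * (Gamma (n / 2 - 1 / 2) / Gamma (n / 2)) ≤ √π / A * ((1 + ε) / √(n / 2)) :=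
        mul_le_mul_of_nonneg_left (h1.trans h3) (by positivity)
    _ = _ := by field_simp

lemma norm_factor (l c s : ℝ) (hx : 0 < 1 - l * c) (β : ℝ) :
    ‖1 - ((l : ℂ) + s * Complex.I) * c‖ ^ (-β) =
      (1 - l * c) ^ (-β) * (1 + (c / (1 - l * c)) ^ 2 * s ^ 2) ^ (-(β / 2)) := by
  set x := 1 - l * c with hxd
  have h1 : (1 - ((l : ℂ) + s * Complex.I) * c) = ((x : ℝ) : ℂ) + ((-(s * c) : ℝ) : ℂ) * Complex.I := by
    rw [hxd]; push_cast; ring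
  rw [h1, Complex.norm_add_mul_I]
  have h2 : √(x ^ 2 + (-(s * c)) ^ 2) = x * (1 + (c / x) ^ 2 * s ^ 2) ^ (1 / 2 : ℝ) := by
    rw [← Real.sqrt_eq_rpow, show x ^ 2 + (-(s * c)) ^ 2 = x ^ 2 * (1 + (c / x) ^ 2 * s ^ 2) by field_simp,
      Real.sqrt_mul (by positivity), Real.sqrt_sq hx.le]
  rw [h2, Real.mul_rpow hx.le (by positivity), ← Real.rpow_mul (by positivity)]
  congr 2; ring

lemma student_prod {ι : Type*} [Fintype ι] (α β c : ι → ℝ) (hα : ∀ i, 0 < α i)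
    (hαβ : ∀ i, α i ≤ β i) (l : ℝ) (hx : ∀ i, 0 < 1 - l * c i) (A : ℝ) (hA : 0 < A)
    (hcA : ∀ i, |c i / (1 - l * c i)| ≤ A) (j : ι) (hj : |c j / (1 - l * c j)| = A)
    (ε : ℝ) (hε0 : 0 < ε) (hε : ε < 1) (hαj : 8 / ε ^ 2 ≤ α j) :
    ∫⁻ s : ℝ, ENNReal.ofReal (∏ i, ‖1 - ((l : ℂ) + s * Complex.I) * c i‖ ^ (-β i)) ≤
      ENNReal.ofReal ((∏ i, (1 - l * c i) ^ (-β i)) *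
        ((1 + ε) * √(2 * π / ∑ i, α i * (c i / (1 - l * c i)) ^ 2))) := by
  set a : ι → ℝ := fun i => c i / (1 - l * c i) with ha
  have hP : 0 ≤ ∏ i, (1 - l * c i) ^ (-β i) := Finset.prod_nonneg fun i _ => (Real.rpow_pos_of_pos (hx i) _).le
  set V := ∑ i, α i * (a i) ^ 2 with hV
  have hVA : 8 / ε ^ 2 ≤ V / A ^ 2 := by
    refine hαj.trans ?_
    rw [le_div_iff₀ (by positivity), ← hj, sq_abs]
    exact Finset.single_le_sum (f := fun i => α i * (a i) ^ 2)
      (fun i _ => mul_nonneg (hα i).le (sq_nonneg _)) (Finset.mem_univ j)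
  rw [ENNReal.ofReal_mul hP]
  refine le_trans ?_ (mul_le_mul_right (student_bound A hA V ε hε0 hε hVA) _)
  rw [← lintegral_const_mul' _ _ ENNReal.ofReal_ne_top]
  refine lintegral_mono fun s => ?_
  rw [← ENNReal.ofReal_mul hP]
  refine ENNReal.ofReal_le_ofReal ?_
  simp only [norm_factor l _ s (hx _)]
  rw [Finset.prod_mul_distrib]
  refine mul_le_mul_of_nonneg_left ?_ hP
  have hb : 0 < 1 + A ^ 2 * s ^ 2 := by positivity
  have e1 : (1 + A ^ 2 * s ^ 2) ^ (-(V / A ^ 2 / 2)) =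
      ∏ i, (1 + A ^ 2 * s ^ 2) ^ (-(α i * (a i ^ 2 / A ^ 2) / 2)) := by
    rw [← Real.rpow_sum_of_pos hb]
    congr 1
    rw [Finset.sum_neg_distrib, hV, Finset.sum_div, Finset.sum_div]
    congr 1
    exact Finset.sum_congr rfl fun i _ => by ring
  rw [e1]
  refine Finset.prod_le_prod (fun i _ => by positivity) fun i _ => ?_
  have hb1 : 1 ≤ 1 + a i ^ 2 * s ^ 2 := by nlinarith [sq_nonneg (a i * s)]
  have hle : a i ^ 2 / A ^ 2 ≤ 1 := by
    rw [div_le_one (by positivity)]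
    exact sq_le_sq' (by linarith [neg_abs_le (a i), hcA i]) ((le_abs_self _).trans (hcA i))
  have hbern : (1 + A ^ 2 * s ^ 2) ^ (a i ^ 2 / A ^ 2) ≤ 1 + a i ^ 2 * s ^ 2 := by
    have := rpow_one_add_le_one_add_mul_self (s := A ^ 2 * s ^ 2) (p := a i ^ 2 / A ^ 2)
      (by nlinarith [sq_nonneg (A * s)]) (by positivity) hle
    refine this.trans (le_of_eq ?_)
    field_simp
  calc (1 + a i ^ 2 * s ^ 2) ^ (-(β i / 2)) ≤ (1 + a i ^ 2 * s ^ 2) ^ (-(α i / 2)) :=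
        Real.rpow_le_rpow_of_exponent_le hb1 (by linarith [hαβ i])
    _ ≤ ((1 + A ^ 2 * s ^ 2) ^ (a i ^ 2 / A ^ 2)) ^ (-(α i / 2)) :=
        Real.rpow_le_rpow_of_nonpos (by positivity) hbern (by linarith [hα i])
    _ = _ := by
        rw [← Real.rpow_mul hb.le]; congr 1; ring

lemma lintegral_affine (h : ℝ → ℝ≥0∞) (hh : Measurable h) (X r : ℝ) (hr : 0 < r) :
    ∫⁻ u, h u = ENNReal.ofReal r * ∫⁻ y, h (X + r * y) := by
  have h1 := Measure.map_addHaar_smul (volume : Measure ℝ) hr.ne'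
  rw [← lintegral_add_left_eq_self h X]
  have hm : Measurable fun u => h (X + u) := hh.comp (measurable_const_add X)
  have h2 : ∫⁻ y, h (X + r * y) = ∫⁻ u, h (X + u) ∂(Measure.map (r • ·) (volume : Measure ℝ)) := by
    rw [lintegral_map hm (measurable_const_smul r)]
    rfl
  rw [h2, h1, lintegral_smul_measure, smul_eq_mul, ← mul_assoc, ← ENNReal.ofReal_mul hr.le]
  simp only [Module.finrank_self, pow_one]
  rw [abs_of_pos (by positivity), mul_inv_cancel₀ (by positivity)]
  simp

/-- the smoothing kernel -/
def kern (lam : ℝ → ℝ) (n : ℕ) (u S : ℝ) : ℝ≥0∞ :=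
  ENNReal.ofReal ((√(2 * π) * (1 / ((n : ℝ) + 1)))⁻¹ * exp (lam u * S - S ^ 2 / (2 * (1 / ((n : ℝ) + 1)) ^ 2)))

lemma kern_liminf (lam : ℝ → ℝ) (hlm : Measurable lam) (μ b : ℝ)
    (hlb : ∀ u ∈ Ioo μ b, |lam u| ≤ 1 / (b - u)) (T X : ℝ) (hT : 0 < T) (hX : X ∈ Ioo μ b) :
    ENNReal.ofReal (1 / T) ≤
      Filter.liminf (fun n => ∫⁻ u in Ioo μ b, kern lam n u (T * (X - u))) Filter.atTop := by
  set τ : ℕ → ℝ := fun n => 1 / ((n : ℝ) + 1) with hτd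
  have hτ : ∀ n, 0 < τ n := fun n => by simp only [hτd]; positivity
  have hτ0 : Filter.Tendsto τ Filter.atTop (nhds 0) := tendsto_one_div_add_atTop_nhds_zero_nat
  set h : ℕ → ℝ → ℝ≥0∞ := fun n y => ENNReal.ofReal (τ n / T) *
    (Ioo μ b).indicator (fun u => kern lam n u (T * (X - u))) (X + τ n / T * y) with hh
  have hkm : ∀ n, Measurable fun u => kern lam n u (T * (X - u)) := by
    intro n; unfold kern; fun_prop
  have hhm : ∀ n, Measurable (h n) := by
    intro n
    exact (((hkm n).indicator measurableSet_Ioo).comp (by fun_prop)).const_mul _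
  have h1 : ∀ n, ∫⁻ u in Ioo μ b, kern lam n u (T * (X - u)) = ∫⁻ y, h n y := by
    intro n
    rw [← lintegral_indicator measurableSet_Ioo,
      lintegral_affine _ ((hkm n).indicator measurableSet_Ioo) X (τ n / T) (div_pos (hτ n) hT),
      ← lintegral_const_mul' _ _ ENNReal.ofReal_ne_top]
  simp only [h1]
  refine le_trans ?_ (lintegral_liminf_le hhm)
  have h2 : ∀ y, Filter.Tendsto (fun n => h n y) Filter.atTop
      (nhds (ENNReal.ofReal (1 / T) * gaussianPDF 0 1 y)) := by
    intro y
    set v : ℕ → ℝ := fun n => X + τ n / T * y with hv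
    have hvX : Filter.Tendsto v Filter.atTop (nhds X) := by
      have : Filter.Tendsto v Filter.atTop (nhds (X + 0 / T * y)) :=
        tendsto_const_nhds.add ((hτ0.div_const T).mul_const y)
      simpa using this
    have hvU : ∀ᶠ n in Filter.atTop, v n ∈ Ioo μ b := hvX.eventually (Ioo_mem_nhds hX.1 hX.2)
    have hsmall : Filter.Tendsto (fun n => lam (v n) * τ n) Filter.atTop (nhds 0) := by
      have hbd : Filter.Tendsto (fun n => 1 / (b - v n) * τ n) Filter.atTop (nhds 0) := by
        have : Filter.Tendsto (fun n => 1 / (b - v n) * τ n) Filter.atTop (nhds (1 / (b - X) * 0)) :=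
          (tendsto_const_nhds.div (tendsto_const_nhds.sub hvX) (sub_pos.2 hX.2).ne').mul hτ0
        simpa using this
      refine squeeze_zero_norm' ?_ hbd
      filter_upwards [hvU] with n hn
      rw [norm_mul, Real.norm_eq_abs, Real.norm_of_nonneg (hτ n).le]
      exact mul_le_mul_of_nonneg_right (hlb _ hn) (hτ n).le
    have hlim : Filter.Tendsto (fun n => ENNReal.ofReal (1 / T * ((√(2 * π))⁻¹ *
        exp (-(lam (v n) * τ n) * y - y ^ 2 / 2)))) Filter.atTop
        (nhds (ENNReal.ofReal (1 / T * ((√(2 * π))⁻¹ * exp (-0 * y - y ^ 2 / 2))))) := by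
      refine (ENNReal.continuous_ofReal.tendsto _).comp ?_
      refine Filter.Tendsto.const_mul _ (Filter.Tendsto.const_mul _ ?_)
      exact (Real.continuous_exp.tendsto _).comp (((hsmall.neg).mul_const y).sub_const _)
    have hfin : ENNReal.ofReal (1 / T) * gaussianPDF 0 1 y =
        ENNReal.ofReal (1 / T * ((√(2 * π))⁻¹ * exp (-0 * y - y ^ 2 / 2))) := by
      rw [gaussianPDF, ← ENNReal.ofReal_mul (by positivity), gaussianPDFReal]
      congr 3
      · simp
      · simp; ring
    rw [hfin]
    refine hlim.congr' ?_
    filter_upwards [hvU] with n hn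
    simp only [hh]
    rw [Set.indicator_of_mem hn, kern, ← ENNReal.ofReal_mul (div_pos (hτ n) hT).le]
    congr 1
    change _ = τ n / T * ((√(2 * π) * τ n)⁻¹ * exp (lam (v n) * (T * (X - v n)) - (T * (X - v n)) ^ 2 / (2 * τ n ^ 2)))
    have e1 : T * (X - v n) = -(τ n * y) := by
      simp only [hv]; field_simp; ring
    have hτn := hτ n
    have e2 : lam (v n) * (T * (X - v n)) - (T * (X - v n)) ^ 2 / (2 * τ n ^ 2) =
        -(lam (v n) * τ n) * y - y ^ 2 / 2 := by
      rw [e1]; field_simp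
    rw [e2]
    have : 0 < √(2 * π) := by positivity
    field_simp
  have h3 : ∀ y, Filter.liminf (fun n => h n y) Filter.atTop = ENNReal.ofReal (1 / T) * gaussianPDF 0 1 y :=
    fun y => (h2 y).liminf_eq
  simp only [h3]
  rw [lintegral_const_mul' _ _ ENNReal.ofReal_ne_top, lintegral_gaussianPDF_eq_one 0 (by norm_num), mul_one]

lemma lintegral_gamma_Ioi (B : ℝ) (hB : 0 < B) :
    ∫⁻ t in Ioi (0 : ℝ), ENNReal.ofReal (gammaPDFReal B 1 t) = 1 := by
  rw [← lintegral_gammaPDF_eq_one hB one_pos, ← lintegral_indicator measurableSet_Ioi]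
  refine lintegral_congr_ae ?_
  filter_upwards [Measure.ae_ne volume (0 : ℝ)] with y hy
  rcases lt_or_gt_of_ne hy with hy | hy
  · rw [gammaPDF_of_neg hy, Set.indicator_of_notMem (by simpa using hy.le)]
  · rw [Set.indicator_of_mem (by simpa using hy)]; rfl

lemma lintegral_gamma_inv (B : ℝ) (hB : 1 < B) :
    ∫⁻ t in Ioi (0 : ℝ), ENNReal.ofReal (gammaPDFReal B 1 t) * ENNReal.ofReal (1 / t) =
      ENNReal.ofReal (1 / (B - 1)) := by
  have hB1 : 0 < B - 1 := by linarith
  have hG := Gamma_pos_of_pos hB1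
  have : ∫⁻ t in Ioi (0 : ℝ), ENNReal.ofReal (gammaPDFReal B 1 t) * ENNReal.ofReal (1 / t) =
      ∫⁻ t in Ioi (0 : ℝ), ENNReal.ofReal (1 / (B - 1)) * ENNReal.ofReal (gammaPDFReal (B - 1) 1 t) := by
    refine setLIntegral_congr_fun measurableSet_Ioi fun t ht => ?_
    have ht : 0 < t := ht
    rw [← ENNReal.ofReal_mul (gammaPDFReal_nonneg (by linarith) one_pos _),
      ← ENNReal.ofReal_mul (by positivity)]
    congr 1
    rw [gammaPDFReal, gammaPDFReal, if_pos ht.le, if_pos ht.le, Real.rpow_sub_one ht.ne' (B - 1)]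
    have : Gamma B = (B - 1) * Gamma (B - 1) := by
      rw [← Real.Gamma_add_one hB1.ne']; congr 1; ring
    rw [this]
    simp only [Real.one_rpow]
    generalize Gamma (B - 1) = G at hG ⊢
    field_simp
  rw [this, lintegral_const_mul' _ _ ENNReal.ofReal_ne_top, lintegral_gamma_Ioi _ hB1, mul_one]

lemma dirichlet_norm {m : ℕ} (β : Fin (m + 1) → ℝ) (hβ : ∀ i, 0 < β i) :
    (dirichletBase m β Set.univ)⁻¹ = ENNReal.ofReal (Gamma (∑ i, β i) / ∏ i, Gamma (β i)) := by
  have hB : 0 < ∑ i, β i := Finset.sum_pos (fun i _ => hβ i) Finset.univ_nonempty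
  have h := gamma_dirichlet_link β hβ (fun _ => 1) measurable_const
  have hg : ∀ i, Integrable (fun y => gammaPDFReal (β i) 1 y) ∧ ∫ y, gammaPDFReal (β i) 1 y = 1 := by
    intro i
    have := integral_gammaPDFReal_exp (β i) (hβ i) 0 one_pos
    simpa using this
  have h1 : ∫⁻ g, ENNReal.ofReal (gprod β g) = 1 := by
    rw [← ofReal_integral_eq_lintegral_ofReal]
    · unfold gprod
      rw [integral_fintype_prod_volume_eq_prod (fun i y => gammaPDFReal (β i) 1 y)]
      simp [fun i => (hg i).2]
    · exact Integrable.fintype_prod (fun i => (hg i).1)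
    · exact Filter.Eventually.of_forall fun g => gprod_nonneg β hβ g
  simp only [one_mul, lintegral_const] at h
  rw [h1, lintegral_mul_const _ (by fun_prop), lintegral_gamma_Ioi _ hB, one_mul] at h
  exact (ENNReal.eq_inv_of_mul_eq_one_left h.symm).symm

lemma dirichlet_interval_le {m : ℕ} (β f : Fin (m + 1) → ℝ) (hβ : ∀ i, 0 < β i) (hB : 1 < ∑ i, β i)
    (lam : ℝ → ℝ) (hlm : Measurable lam) (μ b : ℝ)
    (hlb : ∀ u ∈ Ioo μ b, |lam u| ≤ 1 / (b - u))
    (hl1 : ∀ u ∈ Ioo μ b, ∀ i, lam u * (f i - u) < 1)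
    (D : ℝ → ℝ≥0∞)
    (hD : ∀ u ∈ Ioo μ b, ENNReal.ofReal (1 / (2 * π)) *
        ∫⁻ s : ℝ, ENNReal.ofReal (∏ i, ‖1 - ((lam u : ℂ) + s * Complex.I) * (f i - u : ℝ)‖ ^ (-β i)) ≤ D u) :
    dirichlet m β {w | ∑ i, f i * w i ∈ Ioo μ b} ≤ ENNReal.ofReal (∑ i, β i - 1) * ∫⁻ u in Ioo μ b, D u := by
  have hB0 : 0 < ∑ i, β i := by linarith
  have hB1 : 0 < ∑ i, β i - 1 := by linarith
  set Φ : (Fin (m + 1) → ℝ) → ℝ≥0∞ := fun g => ENNReal.ofReal (1 / ∑ i, g i) *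
    (Ioo μ b).indicator 1 ((∑ i, f i * g i) / ∑ i, g i) with hΦ
  have hind : Measurable ((Ioo μ b).indicator (1 : ℝ → ℝ≥0∞)) := measurable_one.indicator measurableSet_Ioo
  have hΦm : Measurable Φ := by
    refine Measurable.mul (by fun_prop) (hind.comp (by fun_prop))
  set Ψ : ℕ → (Fin (m + 1) → ℝ) → ℝ≥0∞ := fun n g =>
    ∫⁻ u in Ioo μ b, kern lam n u (∑ i, (f i - u) * g i) with hΨ
  have hkm : ∀ n, Measurable fun p : (Fin (m + 1) → ℝ) × ℝ => kern lam n p.2 (∑ i, (f i - p.2) * p.1 i) := by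
    intro n; unfold kern; fun_prop
  have hΨm : ∀ n, Measurable (Ψ n) := by
    intro n
    exact (hkm n).lintegral_prod_right'
  have h1 : ∀ g, Φ g ≤ Filter.liminf (fun n => Ψ n g) Filter.atTop := by
    intro g
    by_cases hT : 0 < ∑ i, g i
    · by_cases hX : (∑ i, f i * g i) / ∑ i, g i ∈ Ioo μ b
      · have := kern_liminf lam hlm μ b hlb _ _ hT hX
        simp only [hΦ]
        rw [Set.indicator_of_mem hX, Pi.one_apply, mul_one]
        refine this.trans_eq ?_
        congr 1
        funext n
        simp only [hΨ]
        congr 1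
        funext u
        congr 1
        rw [mul_sub, mul_div_cancel₀ _ hT.ne', mul_comm, Finset.mul_sum, ← Finset.sum_sub_distrib]
        exact Finset.sum_congr rfl fun i _ => by ring
      · simp only [hΦ]
        rw [Set.indicator_of_notMem hX]; simp
    · simp only [hΦ]
      rw [ENNReal.ofReal_of_nonpos (by rw [one_div]; exact inv_nonpos.2 (not_lt.1 hT))]; simp
  have h2 : ∀ n, ∫⁻ g, Ψ n g * ENNReal.ofReal (gprod β g) ≤ ∫⁻ u in Ioo μ b, D u := by
    intro n
    have hgm : Measurable fun g => ENNReal.ofReal (gprod β g) := (measurable_gprod β).ennreal_ofReal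
    calc ∫⁻ g, Ψ n g * ENNReal.ofReal (gprod β g)
        = ∫⁻ g, ∫⁻ u in Ioo μ b, kern lam n u (∑ i, (f i - u) * g i) * ENNReal.ofReal (gprod β g) := by
          refine lintegral_congr fun g => ?_
          rw [lintegral_mul_const' _ _ ENNReal.ofReal_ne_top]
      _ = ∫⁻ u in Ioo μ b, ∫⁻ g, kern lam n u (∑ i, (f i - u) * g i) * ENNReal.ofReal (gprod β g) := by
          rw [lintegral_lintegral_swap]
          exact ((hkm n).mul (hgm.comp measurable_fst)).aemeasurable
      _ ≤ ∫⁻ u in Ioo μ b, D u := by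
          refine setLIntegral_mono' measurableSet_Ioo fun u hu => ?_
          exact (smoothing_le β (fun i => f i - u) hβ (lam u) (hl1 u hu) (1 / ((n : ℝ) + 1))
            (by positivity)).trans (hD u hu)
  have h3 : ∫⁻ g, Φ g * ENNReal.ofReal (gprod β g) ≤ ∫⁻ u in Ioo μ b, D u := by
    have hgm : Measurable fun g => ENNReal.ofReal (gprod β g) := (measurable_gprod β).ennreal_ofReal
    calc ∫⁻ g, Φ g * ENNReal.ofReal (gprod β g)
        ≤ ∫⁻ g, Filter.liminf (fun n => Ψ n g * ENNReal.ofReal (gprod β g)) Filter.atTop := by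
          refine lintegral_mono fun g => ?_
          refine (mul_le_mul_left (h1 g) _).trans_eq ?_
          by_cases h0 : ENNReal.ofReal (gprod β g) = 0
          · simp [h0]
          · exact (ENNReal.mulRightOrderIso _ (ENNReal.isUnit_iff.2 ⟨h0, ENNReal.ofReal_ne_top⟩)).liminf_apply
      _ ≤ Filter.liminf (fun n => ∫⁻ g, Ψ n g * ENNReal.ofReal (gprod β g)) Filter.atTop :=
          lintegral_liminf_le fun n => (hΨm n).mul hgm
      _ ≤ ∫⁻ u in Ioo μ b, D u := by
          refine (Filter.liminf_le_liminf (Filter.Eventually.of_forall h2)).trans_eq ?_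
          simp
  set S : Set (Fin (m + 1) → ℝ) := {w | ∑ i, f i * w i ∈ Ioo μ b} with hS
  have hSm : MeasurableSet S := by
    have : Measurable fun w : Fin (m + 1) → ℝ => ∑ i, f i * w i := by fun_prop
    exact this measurableSet_Ioo
  have hsn : Measurable (fun x : Fin m → ℝ => (Fin.snoc x (1 - ∑ i, x i) : Fin (m + 1) → ℝ)) := by
    have : Measurable fun x : Fin m → ℝ => ((1 - ∑ i, x i : ℝ), x) := by fun_prop
    exact measurable_snocFun.comp this
  have h4 : dirichlet m β S = ENNReal.ofReal (Gamma (∑ i, β i) / ∏ i, Gamma (β i)) *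
      ∫⁻ x, (Ioo μ b).indicator 1 (∑ i, f i * (Fin.snoc x (1 - ∑ i, x i) : Fin (m + 1) → ℝ) i)
        ∂(dirichletBase m β) := by
    rw [dirichlet, dirichlet_norm β hβ, Measure.map_apply hsn hSm, Measure.smul_apply, smul_eq_mul]
    congr 1
    rw [← lintegral_indicator_one (hsn hSm)]
    rfl
  rw [gamma_dirichlet_link β hβ Φ hΦm] at h3
  have h5 : ∫⁻ t in Ioi (0 : ℝ), ENNReal.ofReal (gammaPDFReal (∑ i, β i) 1 t) *
        (ENNReal.ofReal (Gamma (∑ i, β i) / ∏ i, Gamma (β i)) *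
          ∫⁻ x, Φ (t • Fin.snoc x (1 - ∑ i, x i)) ∂(dirichletBase m β)) =
      ∫⁻ t in Ioi (0 : ℝ), (ENNReal.ofReal (gammaPDFReal (∑ i, β i) 1 t) * ENNReal.ofReal (1 / t)) *
        dirichlet m β S := by
    refine setLIntegral_congr_fun measurableSet_Ioi fun t ht => ?_
    have ht : 0 < t := ht
    have : ∀ x : Fin m → ℝ, Φ (t • Fin.snoc x (1 - ∑ i, x i)) = ENNReal.ofReal (1 / t) *
        (Ioo μ b).indicator 1 (∑ i, f i * (Fin.snoc x (1 - ∑ i, x i) : Fin (m + 1) → ℝ) i) := by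
      intro x
      have e1 : ∑ i, (t • (Fin.snoc x (1 - ∑ i, x i) : Fin (m + 1) → ℝ)) i = t := by
        simp only [Pi.smul_apply, smul_eq_mul]
        rw [← Finset.mul_sum, Fin.sum_univ_castSucc]
        simp
      have e2 : ∑ i, f i * (t • (Fin.snoc x (1 - ∑ i, x i) : Fin (m + 1) → ℝ)) i =
          t * ∑ i, f i * (Fin.snoc x (1 - ∑ i, x i) : Fin (m + 1) → ℝ) i := by
        simp only [Pi.smul_apply, smul_eq_mul]
        rw [Finset.mul_sum]
        exact Finset.sum_congr rfl fun i _ => by ring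
      simp only [hΦ]
      rw [e1, e2, mul_div_cancel_left₀ _ ht.ne']
    simp only [this]
    rw [lintegral_const_mul' _ _ ENNReal.ofReal_ne_top, h4]
    ring
  rw [h5, lintegral_mul_const _ (by fun_prop), lintegral_gamma_inv _ hB] at h3
  calc dirichlet m β S = ENNReal.ofReal (∑ i, β i - 1) * (ENNReal.ofReal (1 / (∑ i, β i - 1)) * dirichlet m β S) := by
        rw [← mul_assoc, ← ENNReal.ofReal_mul hB1.le, mul_one_div_cancel hB1.ne', ENNReal.ofReal_one, one_mul]
    _ ≤ _ := mul_le_mul_right h3 _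

/-- standing assumptions on the normalized weights and the function -/
structure PF {m : ℕ} (p f : Fin (m + 1) → ℝ) (b : ℝ) : Prop where
  hp : ∀ i, 0 < p i
  hs : ∑ i, p i = 1
  hb : 0 < b
  hf : ∀ i, f i ∈ Set.Icc (0 : ℝ) b
  hf0 : f 0 = 0
  hfm : f (Fin.last m) = b

/-- dual variable as a function of the parameter `v` -/
def lamv {m : ℕ} (p f : Fin (m + 1) → ℝ) (v : ℝ) : ℝ := ∑ i, p i / (v - f i)
/-- mean level as a function of the parameter `v` -/
def uv {m : ℕ} (p f : Fin (m + 1) → ℝ) (v : ℝ) : ℝ := v - 1 / lamv p f v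
/-- divergence as a function of the parameter `v` -/
def Kv {m : ℕ} (p f : Fin (m + 1) → ℝ) (v : ℝ) : ℝ :=
  log (lamv p f v) + ∑ i, p i * log (v - f i)
/-- derivative of `uv` -/
def duv {m : ℕ} (p f : Fin (m + 1) → ℝ) (v : ℝ) : ℝ :=
  1 - (∑ i, p i / (v - f i) ^ 2) / (lamv p f v) ^ 2

namespace PF
variable {m : ℕ} {p f : Fin (m + 1) → ℝ} {b : ℝ}

lemma vf (H : PF p f b) {v : ℝ} (hv : b < v) (i : Fin (m + 1)) : 0 < v - f i := by
  linarith [(H.hf i).2]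

lemma lam_pos (H : PF p f b) {v : ℝ} (hv : b < v) : 0 < lamv p f v :=
  Finset.sum_pos (fun i _ => div_pos (H.hp i) (H.vf hv i)) Finset.univ_nonempty

lemma x_eq (H : PF p f b) {v : ℝ} (hv : b < v) (i : Fin (m + 1)) :
    1 - lamv p f v * (f i - uv p f v) = lamv p f v * (v - f i) := by
  have := (H.lam_pos hv).ne'
  unfold uv
  field_simp
  ring

lemma x_pos (H : PF p f b) {v : ℝ} (hv : b < v) (i : Fin (m + 1)) : 0 < lamv p f v * (v - f i) :=
  mul_pos (H.lam_pos hv) (H.vf hv i)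

lemma sum_q (H : PF p f b) {v : ℝ} (hv : b < v) : ∑ i, p i / (lamv p f v * (v - f i)) = 1 := by
  have hl := (H.lam_pos hv).ne'
  have : ∀ i, p i / (lamv p f v * (v - f i)) = (p i / (v - f i)) / lamv p f v := by
    intro i
    have := (H.vf hv i).ne'
    field_simp
  simp only [this]
  rw [← Finset.sum_div]
  exact div_self hl

lemma sum_fq (H : PF p f b) {v : ℝ} (hv : b < v) : ∑ i, f i * (p i / (lamv p f v * (v - f i))) = uv p f v := by
  have hl := (H.lam_pos hv).ne'
  have : ∀ i, f i * (p i / (lamv p f v * (v - f i))) =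
      v * (p i / (lamv p f v * (v - f i))) - p i / lamv p f v := by
    intro i
    have := (H.vf hv i).ne'
    field_simp
    ring
  simp only [this]
  rw [Finset.sum_sub_distrib, ← Finset.mul_sum, H.sum_q hv, ← Finset.sum_div, H.hs, uv, mul_one]

lemma K_eq (H : PF p f b) {v : ℝ} (hv : b < v) : Kv p f v = ∑ i, p i * log (lamv p f v * (v - f i)) := by
  have : ∀ i, p i * log (lamv p f v * (v - f i)) = p i * log (lamv p f v) + p i * log (v - f i) := by
    intro i
    rw [Real.log_mul (H.lam_pos hv).ne' (H.vf hv i).ne']; ring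
  simp only [this]
  rw [Finset.sum_add_distrib, ← Finset.sum_mul, H.hs, one_mul, Kv]

lemma lam_deriv (H : PF p f b) {v : ℝ} (hv : b < v) :
    HasDerivAt (lamv p f) (-∑ i, p i / (v - f i) ^ 2) v := by
  unfold lamv
  rw [← Finset.sum_neg_distrib]
  refine HasDerivAt.fun_sum fun i _ => ?_
  have h1 : HasDerivAt (fun v => v - f i) 1 v := (hasDerivAt_id v).sub_const _
  have := (hasDerivAt_const v (p i)).fun_div h1 (H.vf hv i).ne'
  refine this.congr_deriv ?_
  ring

lemma u_deriv (H : PF p f b) {v : ℝ} (hv : b < v) : HasDerivAt (uv p f) (duv p f v) v := by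
  unfold uv
  have := (hasDerivAt_id v).fun_sub ((hasDerivAt_const v (1 : ℝ)).fun_div (H.lam_deriv hv) (H.lam_pos hv).ne')
  refine this.congr_deriv ?_
  rw [duv]; ring

lemma K_deriv (H : PF p f b) {v : ℝ} (hv : b < v) : HasDerivAt (Kv p f) (lamv p f v * duv p f v) v := by
  unfold Kv
  have h1 : HasDerivAt (fun v => ∑ i, p i * log (v - f i)) (∑ i, p i * (1 / (v - f i))) v := by
    refine HasDerivAt.fun_sum fun i _ => ?_
    have h1 : HasDerivAt (fun v => v - f i) 1 v := (hasDerivAt_id v).sub_const _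
    exact (h1.log (H.vf hv i).ne').const_mul _
  have := ((H.lam_deriv hv).log (H.lam_pos hv).ne').fun_add h1
  refine this.congr_deriv ?_
  have e : ∑ i, p i * (1 / (v - f i)) = lamv p f v := by
    unfold lamv
    exact Finset.sum_congr rfl fun i _ => by ring
  have hl := (H.lam_pos hv).ne'
  rw [e, duv]
  field_simp
  ring

lemma duv_neg (H : PF p f b) {v : ℝ} (hv : b < v) : duv p f v < 0 := by
  have hl := H.lam_pos hv
  set l := lamv p f v with hld
  have h1 : 0 < ∑ i, p i * (1 / (v - f i) - l) ^ 2 := by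
    by_contra hcon
    have h0 : ∑ i, p i * (1 / (v - f i) - l) ^ 2 = 0 :=
      le_antisymm (not_lt.1 hcon) (Finset.sum_nonneg fun i _ => mul_nonneg (H.hp i).le (sq_nonneg _))
    rw [Finset.sum_eq_zero_iff_of_nonneg (fun i _ => mul_nonneg (H.hp i).le (sq_nonneg _))] at h0
    have h2 : ∀ i, 1 / (v - f i) = l := by
      intro i
      have := h0 i (Finset.mem_univ i)
      rcases mul_eq_zero.1 this with h | h
      · exact absurd h (H.hp i).ne'
      · linarith [pow_eq_zero_iff (two_ne_zero) |>.1 h]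
    have h3 := (h2 0).trans (h2 (Fin.last m)).symm
    rw [H.hf0, H.hfm] at h3
    have hb := H.hb
    have hvb : 0 < v - b := by linarith
    have hv0 : 0 < v - 0 := by linarith
    rw [div_eq_div_iff hv0.ne' hvb.ne'] at h3
    linarith
  have h2 : ∑ i, p i * (1 / (v - f i) - l) ^ 2 = ∑ i, p i / (v - f i) ^ 2 - l ^ 2 := by
    have : ∀ i, p i * (1 / (v - f i) - l) ^ 2 =
        p i / (v - f i) ^ 2 - 2 * l * (p i / (v - f i)) + l ^ 2 * p i := by
      intro i; have := (H.vf hv i).ne'; field_simp; ring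
    simp only [this]
    rw [Finset.sum_add_distrib, Finset.sum_sub_distrib, ← Finset.mul_sum, ← Finset.mul_sum, H.hs]
    change _ - 2 * l * l + _ = _
    ring
  rw [duv, sub_neg, lt_div_iff₀ (by positivity)]
  linarith

lemma u_anti (H : PF p f b) : StrictAntiOn (uv p f) (Ioi b) := by
  refine strictAntiOn_of_deriv_neg (convex_Ioi b) (fun v hv => (H.u_deriv hv).continuousAt.continuousWithinAt) ?_
  intro v hv
  rw [interior_Ioi] at hv
  rw [(H.u_deriv hv).deriv]
  exact H.duv_neg hv

lemma K_anti (H : PF p f b) : StrictAntiOn (Kv p f) (Ioi b) := by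
  refine strictAntiOn_of_deriv_neg (convex_Ioi b) (fun v hv => (H.K_deriv hv).continuousAt.continuousWithinAt) ?_
  intro v hv
  rw [interior_Ioi] at hv
  rw [(H.K_deriv hv).deriv]
  exact mul_neg_of_pos_of_neg (H.lam_pos hv) (H.duv_neg hv)

lemma lam_anti (H : PF p f b) : AntitoneOn (lamv p f) (Ioi b) := by
  intro v hv w hw hvw
  refine Finset.sum_le_sum fun i _ => ?_
  exact div_le_div_of_nonneg_left (H.hp i).le (H.vf hv i) (by linarith)

lemma pf_nonneg (H : PF p f b) : 0 ≤ ∑ i, f i * p i :=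
  Finset.sum_nonneg fun i _ => mul_nonneg (H.hf i).1 (H.hp i).le

lemma u_surj (H : PF p f b) {u : ℝ} (hu : u ∈ Ioo (∑ i, f i * p i) b) : ∃ v, b < v ∧ uv p f v = u := by
  have hb := H.hb
  have hpm := H.hp (Fin.last m)
  have hu0 : 0 ≤ u := H.pf_nonneg.trans hu.1.le
  have hup : 0 < u - ∑ i, f i * p i := by linarith [hu.1]
  have hbu : 0 < b - u := by linarith [hu.2]
  -- the lower end of the parameter range
  have h1 : ∃ v, b < v ∧ u ≤ uv p f v := by
    refine ⟨b + p (Fin.last m) * (b - u), by nlinarith, ?_⟩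
    set v := b + p (Fin.last m) * (b - u) with hvd
    have hv : b < v := by rw [hvd]; nlinarith
    have hle : 1 / (b - u) ≤ lamv p f v := by
      have := Finset.single_le_sum (f := fun i => p i / (v - f i))
        (fun i _ => (div_pos (H.hp i) (H.vf hv i)).le) (Finset.mem_univ (Fin.last m))
      refine le_trans (le_of_eq ?_) this
      simp only [H.hfm, hvd]
      have : b + p (Fin.last m) * (b - u) - b = p (Fin.last m) * (b - u) := by ring
      rw [this]
      field_simp
    have : 1 / lamv p f v ≤ b - u := by
      rw [div_le_iff₀ (H.lam_pos hv)]
      rw [div_le_iff₀ hbu] at hle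
      linarith
    unfold uv
    linarith
  have h2 : ∃ v, b < v ∧ uv p f v ≤ u := by
    have hq : 0 < b ^ 2 / (u - ∑ i, f i * p i) := by positivity
    refine ⟨b + b ^ 2 / (u - ∑ i, f i * p i), by linarith, ?_⟩
    set v := b + b ^ 2 / (u - ∑ i, f i * p i) with hvd
    have hv : b < v := by linarith
    have hv0 : 0 < v := by linarith
    have hvb : 0 < v - b := by linarith
    have hkey : (u - ∑ i, f i * p i) * (v - b) = b ^ 2 := by
      rw [hvd]; field_simp; ring
    have hpt : ∀ i, p i * ((f i - u) / (v - f i)) ≤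
        (f i * p i - u * p i) / v + p i * (b ^ 2 / (v * (v - b))) := by
      intro i
      have hvf := H.vf hv i
      have hfi := H.hf i
      have e : (f i - u) / (v - f i) = (f i - u) / v + (f i - u) * f i / (v * (v - f i)) := by
        field_simp; ring
      have e2 : (f i - u) * f i / (v * (v - f i)) ≤ b ^ 2 / (v * (v - b)) := by
        refine div_le_div₀ (by positivity) ?_ (by positivity) ?_
        · nlinarith [hfi.1, hfi.2]
        · nlinarith [hfi.1, hfi.2]
      rw [e]
      have := mul_le_mul_of_nonneg_left e2 (H.hp i).le
      calc _ = p i * ((f i - u) / v) + p i * ((f i - u) * f i / (v * (v - f i))) := by ring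
        _ ≤ p i * ((f i - u) / v) + p i * (b ^ 2 / (v * (v - b))) := by linarith
        _ = _ := by ring
    have hsum := Finset.sum_le_sum fun i (_ : i ∈ Finset.univ) => hpt i
    rw [Finset.sum_add_distrib, ← Finset.sum_div, Finset.sum_sub_distrib, ← Finset.mul_sum, ← Finset.sum_mul,
      H.hs] at hsum
    have hz : (∑ i, f i * p i - u * 1) / v + 1 * (b ^ 2 / (v * (v - b))) = 0 := by
      rw [← hkey]; field_simp; ring
    rw [hz] at hsum
    have hs2 : ∑ i, p i * ((f i - u) / (v - f i)) = lamv p f v * (v - u) - 1 := by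
      have : ∀ i, p i * ((f i - u) / (v - f i)) = (p i / (v - f i)) * (v - u) - p i := by
        intro i; have := (H.vf hv i).ne'; field_simp; ring
      simp only [this]
      rw [Finset.sum_sub_distrib, ← Finset.sum_mul, H.hs]; rfl
    rw [hs2] at hsum
    have : v - u ≤ 1 / lamv p f v := by
      rw [le_div_iff₀ (H.lam_pos hv)]; linarith
    unfold uv
    linarith
  obtain ⟨v1, hv1, h1⟩ := h1
  obtain ⟨v2, hv2, h2⟩ := h2
  have hc : ContinuousOn (uv p f) (Ioi b) := fun v hv => (H.u_deriv hv).continuousAt.continuousWithinAt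
  obtain ⟨v, hv, h⟩ := isPreconnected_Ioi.intermediate_value (show v2 ∈ Ioi b from hv2)
    (show v1 ∈ Ioi b from hv1) hc ⟨h2, h1⟩
  exact ⟨v, hv, h⟩

lemma K_pos (H : PF p f b) {v : ℝ} (hv : b < v) : 0 < Kv p f v := by
  rw [H.K_eq hv]
  set x : Fin (m + 1) → ℝ := fun i => lamv p f v * (v - f i) with hx
  have hxp : ∀ i, 0 < x i := H.x_pos hv
  have hq : ∑ i, p i / x i = 1 := H.sum_q hv
  have hle : ∀ i, p i - p i / x i ≤ p i * log (x i) := by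
    intro i
    have := Real.one_sub_inv_le_log_of_pos (hxp i)
    calc _ = p i * (1 - (x i)⁻¹) := by rw [div_eq_mul_inv]; ring
      _ ≤ _ := mul_le_mul_of_nonneg_left this (H.hp i).le
  have h0 : ∑ i, (p i - p i / x i) = 0 := by
    rw [Finset.sum_sub_distrib, hq, H.hs, sub_self]
  have hne : x 0 ≠ x (Fin.last m) := by
    simp only [hx, H.hf0, H.hfm]
    intro h
    have := mul_left_cancel₀ (H.lam_pos hv).ne' h
    linarith [H.hb]
  have hlt : ∀ i, x i ≠ 1 → p i - p i / x i < p i * log (x i) := by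
    intro i hi
    have h := Real.log_lt_sub_one_of_pos (inv_pos.2 (hxp i)) (by simpa using hi)
    rw [Real.log_inv] at h
    calc _ = p i * (1 - (x i)⁻¹) := by rw [div_eq_mul_inv]; ring
      _ < _ := mul_lt_mul_of_pos_left (by linarith) (H.hp i)
  change 0 < ∑ i, p i * log (x i)
  rw [← h0]
  refine Finset.sum_lt_sum (fun i _ => hle i) ?_
  by_cases h : x 0 = 1
  · exact ⟨Fin.last m, Finset.mem_univ _, hlt _ fun h' => hne (h.trans h'.symm)⟩
  · exact ⟨0, Finset.mem_univ _, hlt _ h⟩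

end PF

lemma two_log_le (x : ℝ) (h : 1 ≤ x) : 2 * log x ≤ x - x⁻¹ := by
  have hx : 0 < x := by linarith
  have hd : ∀ y : ℝ, 0 < y →
      HasDerivAt (fun y : ℝ => y - y⁻¹ - 2 * log y) (1 - (-(y ^ 2)⁻¹) - 2 * y⁻¹) y := fun y hy =>
    ((hasDerivAt_id y).fun_sub (hasDerivAt_inv hy.ne')).fun_sub ((Real.hasDerivAt_log hy.ne').const_mul 2)
  have hmono : MonotoneOn (fun y : ℝ => y - y⁻¹ - 2 * log y) (Ioi 0) := by
    refine monotoneOn_of_deriv_nonneg (convex_Ioi 0) ?_ ?_ ?_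
    · intro y hy
      exact (hd y hy).continuousAt.continuousWithinAt
    · intro y hy
      rw [interior_Ioi] at hy
      exact (hd y hy).differentiableAt.differentiableWithinAt
    · intro y hy
      rw [interior_Ioi] at hy
      have hy0 : (0 : ℝ) < y := hy
      rw [(hd y hy).deriv]
      have : 1 - (-(y ^ 2)⁻¹) - 2 * y⁻¹ = (1 - y⁻¹) ^ 2 := by field_simp; ring
      rw [this]; positivity
  have := hmono (show (1 : ℝ) ∈ Ioi 0 by simp) (show x ∈ Ioi 0 from hx) h
  simp only [inv_one, Real.log_one] at this
  linarith

lemma two_log_le_of_le_one (x : ℝ) (hx : 0 < x) (h : x ≤ 1) :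
    2 * log x ≤ 3 - 4 * x⁻¹ + x⁻¹ ^ 2 := by
  have hd : ∀ y : ℝ, 0 < y →
      HasDerivAt (fun y : ℝ => 2 * log y + 4 * y⁻¹ - y⁻¹ ^ 2)
        (2 * y⁻¹ + 4 * (-(y ^ 2)⁻¹) - (2 : ℕ) * y⁻¹ ^ (2 - 1) * (-(y ^ 2)⁻¹)) y := fun y hy =>
    (((Real.hasDerivAt_log hy.ne').const_mul 2).fun_add ((hasDerivAt_inv hy.ne').const_mul 4)).fun_sub
      ((hasDerivAt_inv hy.ne').fun_pow 2)
  have hmono : MonotoneOn (fun y : ℝ => 2 * log y + 4 * y⁻¹ - y⁻¹ ^ 2) (Ioi 0) := by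
    refine monotoneOn_of_deriv_nonneg (convex_Ioi 0) ?_ ?_ ?_
    · intro y hy
      exact (hd y hy).continuousAt.continuousWithinAt
    · intro y hy
      rw [interior_Ioi] at hy
      exact (hd y hy).differentiableAt.differentiableWithinAt
    · intro y hy
      rw [interior_Ioi] at hy
      have hy0 : (0 : ℝ) < y := hy
      rw [(hd y hy).deriv]
      have : 2 * y⁻¹ + 4 * (-(y ^ 2)⁻¹) - (2 : ℕ) * y⁻¹ ^ (2 - 1) * (-(y ^ 2)⁻¹) = 2 * (1 - y⁻¹) ^ 2 * y⁻¹ := by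
        push_cast; field_simp; ring
      rw [this]; positivity
  have := hmono (show x ∈ Ioi 0 from hx) (show (1 : ℝ) ∈ Ioi 0 by simp) h
  simp only [inv_one, Real.log_one] at this
  linarith

lemma xlog_bound (x M : ℝ) (hx : 0 < x) (hxM : x ≤ M) (hM : 1 ≤ M) :
    2 * x * (x * log x - x + 1) ≤ M ^ 2 * (x - 1) ^ 2 := by
  have hM2 : 1 ≤ M ^ 2 := by nlinarith
  rcases le_or_gt x 1 with h | h
  · have h1 := two_log_le_of_le_one x hx h
    have h2 := mul_le_mul_of_nonneg_left h1 (sq_nonneg x)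
    have h3 : x ^ 2 * (3 - 4 * x⁻¹ + x⁻¹ ^ 2) = 3 * x ^ 2 - 4 * x + 1 := by field_simp
    rw [h3] at h2
    have h4 := mul_le_mul_of_nonneg_right hM2 (sq_nonneg (x - 1))
    nlinarith
  · have h1 := two_log_le x h.le
    have h2 := mul_le_mul_of_nonneg_left h1 (sq_nonneg x)
    have h3 : x ^ 2 * (x - x⁻¹) = x * (x ^ 2 - 1) := by field_simp
    rw [h3] at h2
    have h5 : x ≤ M ^ 2 := by nlinarith
    have h4 := mul_le_mul_of_nonneg_right h5 (sq_nonneg (x - 1))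
    nlinarith

namespace PF
variable {m : ℕ} {p f : Fin (m + 1) → ℝ} {b : ℝ}

lemma K_le (H : PF p f b) {v : ℝ} (hv : b < v) (hu : 0 ≤ uv p f v) :
    2 * Kv p f v ≤ lamv p f v ^ 2 * (lamv p f v * (v - f 0)) ^ 2 *
      ∑ i, p i * ((f i - uv p f v) / (lamv p f v * (v - f i))) ^ 2 := by
  have hl := H.lam_pos hv
  set x : Fin (m + 1) → ℝ := fun i => lamv p f v * (v - f i) with hx
  have hxp : ∀ i, 0 < x i := H.x_pos hv
  have hxe : ∀ i, 1 - lamv p f v * (f i - uv p f v) = x i := H.x_eq hv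
  have hM : 1 ≤ x 0 := by
    rw [← hxe 0, H.hf0]
    nlinarith
  have hxM : ∀ i, x i ≤ x 0 := by
    intro i
    simp only [hx]
    refine mul_le_mul_of_nonneg_left ?_ hl.le
    rw [H.hf0]; linarith [(H.hf i).1]
  have hq : ∑ i, p i / x i = 1 := H.sum_q hv
  have e1 : 2 * Kv p f v = ∑ i, (p i / (x i) ^ 2) * (2 * x i * (x i * log (x i) - x i + 1)) := by
    have : ∀ i, (p i / (x i) ^ 2) * (2 * x i * (x i * log (x i) - x i + 1)) =
        2 * (p i * log (x i)) - 2 * p i + 2 * (p i / x i) := by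
      intro i; have := (hxp i).ne'; field_simp
    simp only [this]
    rw [Finset.sum_add_distrib, Finset.sum_sub_distrib, ← Finset.mul_sum, ← Finset.mul_sum, ← Finset.mul_sum,
      hq, H.hs, H.K_eq hv]
    ring
  rw [e1, Finset.mul_sum]
  refine Finset.sum_le_sum fun i _ => ?_
  have h1 := xlog_bound (x i) (x 0) (hxp i) (hxM i) hM
  refine (mul_le_mul_of_nonneg_left h1 (div_pos (H.hp i) (pow_pos (hxp i) 2)).le).trans_eq ?_
  have h2 : (x i - 1) = - (lamv p f v * (f i - uv p f v)) := by rw [← hxe i]; ring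
  rw [h2]
  change _ = lamv p f v ^ 2 * (x 0) ^ 2 * (p i * ((f i - uv p f v) / x i) ^ 2)
  ring

lemma Kinf_le (H : PF p f b) {v : ℝ} (hv : b < v) : Kinf p (uv p f v) f ≤ Kv p f v := by
  refine csInf_le ⟨0, ?_⟩ ?_
  · rintro _ ⟨q, hq, hpq, -, rfl⟩
    have hle : ∀ i, p i - q i ≤ if p i = 0 then 0 else p i * Real.log (p i / q i) := by
      intro i
      rw [if_neg (H.hp i).ne']
      have hqi : 0 < q i := lt_of_le_of_ne (hq.1 i) fun h => (H.hp i).ne' (hpq i h.symm)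
      have := Real.one_sub_inv_le_log_of_pos (div_pos (H.hp i) hqi)
      refine le_trans (le_of_eq ?_) (mul_le_mul_of_nonneg_left this (H.hp i).le)
      have := (H.hp i).ne'
      field_simp
    have := Finset.sum_le_sum fun i (_ : i ∈ Finset.univ) => hle i
    rw [Finset.sum_sub_distrib, hq.2, H.hs, sub_self] at this
    exact this
  · refine ⟨fun i => p i / (lamv p f v * (v - f i)), ⟨fun i => (div_pos (H.hp i) (H.x_pos hv i)).le, H.sum_q hv⟩,
      fun i hi => absurd hi (div_pos (H.hp i) (H.x_pos hv i)).ne', (H.sum_fq hv).ge, ?_⟩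
    rw [H.K_eq hv, klReal]
    refine Finset.sum_congr rfl fun i _ => ?_
    rw [if_neg (H.hp i).ne', div_div_cancel₀ (H.hp i).ne']

/-- pointwise Fourier bound at parameter `v` -/
lemma fourier_bound (H : PF p f b) {v : ℝ} (hv : b < v) (hu : 0 < uv p f v) (α : Fin (m + 1) → ℝ) (S : ℝ) (hS : 0 < S)
    (hα : ∀ i, α i = S * p i) (ε : ℝ) (hε0 : 0 < ε) (hε1 : ε < 1)
    (h0 : 8 / ε ^ 2 ≤ α 0) (h1 : 8 / ε ^ 2 ≤ α (Fin.last m)) :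
    ENNReal.ofReal (1 / (2 * π)) * ∫⁻ s : ℝ, ENNReal.ofReal (∏ i,
        ‖1 - ((lamv p f v : ℂ) + s * Complex.I) * (f i - uv p f v : ℝ)‖ ^
          (-(Function.update α 0 (α 0 + 1)) i)) ≤
      ENNReal.ofReal ((1 + ε) * ((√(2 * π))⁻¹ * exp (-(S * Kv p f v)) * (lamv p f v / √(2 * S * Kv p f v)))) := by
  have hl := H.lam_pos hv
  have hK := H.K_pos hv
  set l := lamv p f v with hld
  set u := uv p f v with hud
  set x : Fin (m + 1) → ℝ := fun i => l * (v - f i) with hx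
  have hxp : ∀ i, 0 < x i := H.x_pos hv
  have hxe : ∀ i, 1 - l * (f i - u) = x i := H.x_eq hv
  have hαp : ∀ i, 0 < α i := fun i => by rw [hα]; exact mul_pos hS (H.hp i)
  have hαβ : ∀ i, α i ≤ (Function.update α 0 (α 0 + 1)) i := by
    intro i
    by_cases hi : i = 0
    · subst hi; simp
    · simp [Function.update_of_ne hi]
  set a : Fin (m + 1) → ℝ := fun i => (f i - u) / x i with ha
  have hae : ∀ i, a i = ((x i)⁻¹ - 1) / l := by
    intro i
    have h := hxe i
    have hxi := (hxp i).ne'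
    have h2 : f i - u = (1 - x i) / l := by rw [← h]; field_simp; ring
    simp only [ha]
    rw [h2]; field_simp
  have hamono : ∀ i j, f i ≤ f j → a i ≤ a j := by
    intro i j hij
    rw [hae, hae]
    have : (x i)⁻¹ ≤ (x j)⁻¹ := inv_anti₀ (hxp j) (mul_le_mul_of_nonneg_left (by linarith) hl.le)
    gcongr
  have ha0 : ∀ i, a 0 ≤ a i := fun i => hamono _ _ (by rw [H.hf0]; exact (H.hf i).1)
  have ham : ∀ i, a i ≤ a (Fin.last m) := fun i => hamono _ _ (by rw [H.hfm]; exact (H.hf i).2)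
  have ha0neg : a 0 < 0 := by
    simp only [ha]; rw [H.hf0]
    exact div_neg_of_neg_of_pos (by linarith) (hxp 0)
  set A := max |a 0| |a (Fin.last m)| with hA
  have hAp : 0 < A := lt_of_lt_of_le (abs_pos.2 ha0neg.ne) (le_max_left _ _)
  have hj : ∃ j, |a j| = A ∧ 8 / ε ^ 2 ≤ α j := by
    rcases max_choice |a 0| |a (Fin.last m)| with h | h
    · exact ⟨0, by rw [hA, h], h0⟩
    · exact ⟨Fin.last m, by rw [hA, h], h1⟩
  have hbd : ∀ i, |a i| ≤ A := fun i => abs_le_max_abs_abs (ha0 i) (ham i)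
  obtain ⟨j, hj, hjα⟩ := hj
  have hmain := student_prod α (Function.update α 0 (α 0 + 1)) (fun i => f i - u) hαp hαβ l
    (fun i => by rw [hxe]; exact hxp i) A hAp (fun i => by rw [hxe]; exact hbd i) j (by rw [hxe]; exact hj)
    ε hε0 hε1 hjα
  refine (mul_le_mul_right hmain _).trans ?_
  rw [← ENNReal.ofReal_mul (by positivity)]
  refine ENNReal.ofReal_le_ofReal ?_
  simp only [hxe]
  have hprod : ∏ i, x i ^ (-(Function.update α 0 (α 0 + 1)) i) = exp (-(S * Kv p f v)) * (x 0)⁻¹ := by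
    have e : ∀ i, x i ^ (-(Function.update α 0 (α 0 + 1)) i) =
        x i ^ (-(α i)) * (if i = 0 then (x 0)⁻¹ else 1) := by
      intro i
      by_cases hi : i = 0
      · subst hi
        simp only [Function.update_self, if_true]
        rw [neg_add, Real.rpow_add (hxp 0), Real.rpow_neg_one]
      · simp [Function.update_of_ne hi, hi]
    simp only [e]
    rw [Finset.prod_mul_distrib, Finset.prod_ite_eq' Finset.univ (0 : Fin (m + 1)) (fun _ => (x 0)⁻¹)]
    simp only [Finset.mem_univ, if_true]
    congr 1
    rw [H.K_eq hv, Finset.mul_sum, ← Finset.sum_neg_distrib, Real.exp_sum]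
    refine Finset.prod_congr rfl fun i _ => ?_
    rw [Real.rpow_def_of_pos (hxp i), hα]
    congr 1
    change _ = -(S * (p i * log (x i)))
    ring
  rw [hprod]
  change 1 / (2 * π) * (exp (-(S * Kv p f v)) * (x 0)⁻¹ * ((1 + ε) * √(2 * π / ∑ i, α i * a i ^ 2))) ≤ _
  have hV : ∑ i, α i * a i ^ 2 = S * ∑ i, p i * a i ^ 2 := by
    rw [Finset.mul_sum]; exact Finset.sum_congr rfl fun i _ => by rw [hα]; ring
  set W := ∑ i, p i * a i ^ 2 with hW
  have hKle : 2 * Kv p f v ≤ l ^ 2 * (x 0) ^ 2 * W := H.K_le hv hu.le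
  have hx0 := hxp 0
  have hWp : 0 < W := by
    by_contra hc
    have : l ^ 2 * (x 0) ^ 2 * W ≤ 0 := mul_nonpos_of_nonneg_of_nonpos (by positivity) (not_lt.1 hc)
    linarith
  rw [hV]
  have hsq : √(2 * S * Kv p f v) ≤ l * x 0 * √(S * W) := by
    have : l * x 0 * √(S * W) = √(S * (l ^ 2 * (x 0) ^ 2 * W)) := by
      rw [show S * (l ^ 2 * (x 0) ^ 2 * W) = (l * x 0) ^ 2 * (S * W) by ring,
        Real.sqrt_mul (sq_nonneg (l * x 0)), Real.sqrt_sq (mul_pos hl hx0).le]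
    rw [this]
    refine Real.sqrt_le_sqrt ?_
    nlinarith
  have hk : 0 < √(2 * S * Kv p f v) := Real.sqrt_pos.2 (by positivity)
  have hsw : 0 < √(S * W) := Real.sqrt_pos.2 (by positivity)
  have h2p : 0 < √(2 * π) := by positivity
  have h2pi : √(2 * π) * √(2 * π) = 2 * π := Real.mul_self_sqrt (by positivity)
  rw [Real.sqrt_div (by positivity)]
  have hfin : (x 0)⁻¹ / √(S * W) ≤ l / √(2 * S * Kv p f v) := by
    rw [div_le_div_iff₀ hsw hk]
    rw [inv_mul_le_iff₀ hx0]
    linarith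
  have hE := Real.exp_pos (-(S * Kv p f v))
  calc _ = (1 + ε) * ((√(2 * π))⁻¹ * exp (-(S * Kv p f v)) * ((x 0)⁻¹ / √(S * W))) := by
        have e : 1 / (2 * π) = (√(2 * π))⁻¹ * (√(2 * π))⁻¹ := by rw [← mul_inv, h2pi, one_div]
        rw [e]
        generalize √(2 * π) = r at h2p ⊢
        field_simp
    _ ≤ _ := by gcongr

end PF

lemma hyperplane_null {m : ℕ} (c : Fin m → ℝ) (j : Fin m) (hj : c j ≠ 0) (d : ℝ) :
    ∀ᵐ x : Fin m → ℝ, ∑ i, c i * x i ≠ d := by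
  set ℓ : (Fin m → ℝ) →ₗ[ℝ] ℝ := ∑ i, c i • LinearMap.proj i with hℓ
  have hℓx : ∀ x, ℓ x = ∑ i, c i * x i := by intro x; simp [hℓ]
  set x0 : Fin m → ℝ := Pi.single j (d / c j) with hx0
  have h0 : ℓ x0 = d := by
    rw [hℓx, Finset.sum_eq_single j]
    · simp [hx0]; field_simp
    · intro i _ hi; simp [hx0, Pi.single_eq_of_ne hi]
    · simp
  have hne : LinearMap.ker ℓ ≠ ⊤ := by
    intro h
    rw [LinearMap.ker_eq_top] at h
    have h1 : ℓ (Pi.single j 1) = c j := by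
      rw [hℓx, Finset.sum_eq_single j]
      · simp
      · intro i _ hi; simp [Pi.single_eq_of_ne hi]
      · simp
    rw [h] at h1
    exact hj (by simpa using h1.symm)
  have hnull := Measure.addHaar_submodule (volume : Measure (Fin m → ℝ)) (LinearMap.ker ℓ) hne
  rw [ae_iff]
  have : {x : Fin m → ℝ | ¬ ∑ i, c i * x i ≠ d} = (fun x => x + (-x0)) ⁻¹' (LinearMap.ker ℓ : Set (Fin m → ℝ)) := by
    ext x
    simp only [Set.mem_ofPred_eq, not_not, Set.mem_preimage, SetLike.mem_coe, LinearMap.mem_ker, map_add, map_neg, h0,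
      hℓx x]
    constructor <;> intro h <;> linarith
  rw [this, measure_preimage_add_right]
  exact hnull

lemma dirichlet_ge_le {m : ℕ} (hm : 1 ≤ m) (β f : Fin (m + 1) → ℝ) (b : ℝ) (hb : 0 < b)
    (hf : ∀ i, f i ∈ Set.Icc (0 : ℝ) b) (hf0 : f 0 = 0) (hfm : f (Fin.last m) = b) (μ : ℝ) :
    dirichlet m β {w | μ ≤ ∑ ℓ, f ℓ * w ℓ} ≤ dirichlet m β {w | ∑ i, f i * w i ∈ Ioo μ b} := by
  have hsn : Measurable (fun x : Fin m → ℝ => (Fin.snoc x (1 - ∑ i, x i) : Fin (m + 1) → ℝ)) := by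
    have : Measurable fun x : Fin m → ℝ => ((1 - ∑ i, x i : ℝ), x) := by fun_prop
    exact measurable_snocFun.comp this
  have hfs : Measurable fun w : Fin (m + 1) → ℝ => ∑ i, f i * w i := by fun_prop
  have hs1 : MeasurableSet {w : Fin (m + 1) → ℝ | μ ≤ ∑ ℓ, f ℓ * w ℓ} := hfs measurableSet_Ici
  have hs2 : MeasurableSet {w : Fin (m + 1) → ℝ | ∑ i, f i * w i ∈ Ioo μ b} := hfs measurableSet_Ioo
  rw [dirichlet, Measure.map_apply hsn hs1, Measure.map_apply hsn hs2,
    Measure.smul_apply, Measure.smul_apply, smul_eq_mul, smul_eq_mul]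
  refine mul_le_mul_right (measure_mono_ae ?_) _
  have hL : ∀ x : Fin m → ℝ, ∑ i, f i * (Fin.snoc x (1 - ∑ i, x i) : Fin (m + 1) → ℝ) i =
      ∑ i : Fin m, (f i.castSucc - b) * x i + b := by
    intro x
    rw [Fin.sum_univ_castSucc]
    simp only [Fin.snoc_castSucc, Fin.snoc_last, hfm, sub_mul, Finset.sum_sub_distrib, ← Finset.mul_sum]
    ring
  have hj : f (Fin.castSucc ⟨0, hm⟩) - b ≠ 0 := by
    have : (Fin.castSucc ⟨0, hm⟩ : Fin (m + 1)) = 0 := rfl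
    rw [this, hf0]; linarith
  have n1 := hyperplane_null (fun i : Fin m => f i.castSucc - b) ⟨0, hm⟩ hj (μ - b)
  have n2 := hyperplane_null (fun i : Fin m => f i.castSucc - b) ⟨0, hm⟩ hj 0
  rw [dirichletBase]
  have hgoal : ∀ᵐ x ∂(volume.withDensity fun x => ENNReal.ofReal (dirichletDensity m β x)),
      μ ≤ ∑ i, f i * (Fin.snoc x (1 - ∑ i, x i) : Fin (m + 1) → ℝ) i →
      ∑ i, f i * (Fin.snoc x (1 - ∑ i, x i) : Fin (m + 1) → ℝ) i ∈ Ioo μ b := by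
    rw [ae_withDensity_iff (measurable_dirichletDensity m β).ennreal_ofReal]
    filter_upwards [n1, n2] with x h1 h2 hx hμ
    rw [hL] at hμ ⊢
    have hxs : (∀ i, 0 ≤ x i) ∧ ∑ i, x i ≤ 1 := by
      by_contra hc
      apply hx
      rw [dirichletDensity, Set.indicator_of_notMem (by simpa using hc), ENNReal.ofReal_zero]
    have hle : ∑ i : Fin m, (f i.castSucc - b) * x i ≤ 0 :=
      Finset.sum_nonpos fun i _ => mul_nonpos_of_nonpos_of_nonneg (by linarith [(hf i.castSucc).2]) (hxs.1 i)
    refine ⟨lt_of_le_of_ne hμ fun h => h1 (by linarith), ?_⟩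
    have := lt_of_le_of_ne hle h2
    linarith
  exact hgoal

lemma c0_ge : 8 ≤ c0 := by
  unfold c0
  have hpi := Real.pi_lt_four
  have hp := Real.pi_pos
  have h6 : 0 ≤ 49 * √6 / 9 := by positivity
  have h1 : (64 : ℝ) ≤ (8 + 49 * √6 / 9) ^ 2 := by nlinarith
  have h2 : (1 / 2 : ℝ) ≤ 2 / π := by
    rw [div_le_div_iff₀ (by norm_num) hp]; linarith
  nlinarith

namespace PF
variable {m : ℕ} {p f : Fin (m + 1) → ℝ} {b : ℝ}

lemma inv_exists (H : PF p f b) : ∃ V : ℝ → ℝ, (∀ v, b < v → V (uv p f v) = v) := by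
  refine ⟨Function.invFunOn (uv p f) (Ioi b), fun v hv => ?_⟩
  exact H.u_anti.injOn.leftInvOn_invFunOn hv

/-- the final chain of inequalities for the open interval -/
lemma interval_bound (H : PF p f b) (α : Fin (m + 1) → ℝ) (S : ℝ) (hS : 0 < S)
    (hα : ∀ i, α i = S * p i) (ε : ℝ) (hε0 : 0 < ε) (hε1 : ε < 1)
    (h0 : 8 / ε ^ 2 ≤ α 0) (h1 : 8 / ε ^ 2 ≤ α (Fin.last m)) (μ : ℝ)
    (hμ : μ ∈ Ioo (∑ i, f i * p i) b) (v0 : ℝ) (hv0 : b < v0) (hv0u : uv p f v0 = μ) :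
    dirichlet m (Function.update α 0 (α 0 + 1)) {w | ∑ i, f i * w i ∈ Ioo μ b} ≤
      ENNReal.ofReal (1 + ε) * gaussianReal 0 1 {x | √(2 * S * Kv p f v0) ≤ x} := by
  obtain ⟨V, hV⟩ := H.inv_exists
  have hμ0 : 0 ≤ μ := H.pf_nonneg.trans hμ.1.le
  have hVb : ∀ u ∈ Ioo μ b, b < V u ∧ uv p f (V u) = u ∧ V u < v0 := by
    intro u hu
    obtain ⟨v, hv, rfl⟩ := H.u_surj (show u ∈ Ioo (∑ i, f i * p i) b from ⟨hμ.1.trans hu.1, hu.2⟩)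
    rw [hV v hv]
    refine ⟨hv, rfl, ?_⟩
    have := hu.1
    rw [← hv0u] at this
    exact (H.u_anti.lt_iff_gt hv0 hv).1 this
  set lam : ℝ → ℝ := (Ioo μ b).indicator (fun u => lamv p f (V u)) with hlam
  have hlame : ∀ u ∈ Ioo μ b, lam u = lamv p f (V u) := fun u hu => by
    rw [hlam, Set.indicator_of_mem hu]
  have hlm : Measurable lam := by
    refine measurable_of_restrict_of_restrict_compl (s := Ioo μ b) measurableSet_Ioo ?_ ?_
    · have : Monotone ((Ioo μ b).domRestrict lam) := by
        rintro ⟨u, hu⟩ ⟨w, hw⟩ huw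
        simp only [Set.domRestrict_apply]
        rw [hlame u hu, hlame w hw]
        refine H.lam_anti (hVb w hw).1 (hVb u hu).1 ?_
        rw [← H.u_anti.le_iff_ge (hVb u hu).1 (hVb w hw).1, (hVb u hu).2.1, (hVb w hw).2.1]
        exact huw
      exact this.measurable
    · have : (Ioo μ b)ᶜ.domRestrict lam = fun _ => 0 := by
        funext u
        have hu : (u : ℝ) ∉ Ioo μ b := u.2
        rw [Set.domRestrict_apply, hlam, Set.indicator_of_notMem hu]
      rw [this]; exact measurable_const
  have hl1 : ∀ u ∈ Ioo μ b, ∀ i, lam u * (f i - u) < 1 := by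
    intro u hu i
    rw [hlame u hu]
    have h := H.x_eq (hVb u hu).1 i
    rw [(hVb u hu).2.1] at h
    linarith [H.x_pos (hVb u hu).1 i]
  have hlb : ∀ u ∈ Ioo μ b, |lam u| ≤ 1 / (b - u) := by
    intro u hu
    have h := hl1 u hu (Fin.last m)
    rw [H.hfm] at h
    rw [abs_of_pos (by rw [hlame u hu]; exact H.lam_pos (hVb u hu).1), le_div_iff₀ (by linarith [hu.2])]
    exact h.le
  set G : ℝ → ℝ := fun v => (1 + ε) *
    ((√(2 * π))⁻¹ * exp (-(S * Kv p f v)) * (lamv p f v / √(2 * S * Kv p f v))) with hG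
  have hβp : ∀ i, 0 < (Function.update α 0 (α 0 + 1)) i := by
    intro i
    have hαp : ∀ i, 0 < α i := fun i => by rw [hα]; exact mul_pos hS (H.hp i)
    by_cases hi : i = 0
    · subst hi; simp only [Function.update_self]; linarith [hαp 0]
    · rw [Function.update_of_ne hi]; exact hαp i
  have hsumα : ∑ i, α i = S := by
    simp only [hα]; rw [← Finset.mul_sum, H.hs, mul_one]
  have hβs : ∑ i, (Function.update α 0 (α 0 + 1)) i = S + 1 := by
    rw [Finset.sum_update_of_mem (Finset.mem_univ _), ← hsumα,
      ← Finset.add_sum_erase Finset.univ α (Finset.mem_univ 0), Finset.sdiff_singleton_eq_erase]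
    ring
  have hmain := dirichlet_interval_le (Function.update α 0 (α 0 + 1)) f hβp (by rw [hβs]; linarith) lam hlm μ b
    hlb hl1 (fun u => ENNReal.ofReal (G (V u))) (by
      intro u hu
      rw [hlame u hu]
      have := H.fourier_bound (hVb u hu).1 (by rw [(hVb u hu).2.1]; linarith [hu.1]) α S hS hα ε hε0 hε1 h0 h1
      rw [(hVb u hu).2.1] at this
      exact this)
  refine hmain.trans ?_
  rw [hβs, add_sub_cancel_right]
  have hsub : Ioo μ b ⊆ uv p f '' Ioo b v0 := fun u hu =>
    ⟨V u, ⟨(hVb u hu).1, (hVb u hu).2.2⟩, (hVb u hu).2.1⟩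
  set r : ℝ → ℝ := fun v => √(2 * S * Kv p f v) with hr
  have hrpos : ∀ v, b < v → 0 < r v := fun v hv => Real.sqrt_pos.2 (by have := H.K_pos hv; positivity)
  have hrd : ∀ v, b < v → HasDerivAt r (S * (lamv p f v * duv p f v) / r v) v := by
    intro v hv
    have hk := H.K_pos hv
    have := ((H.K_deriv hv).const_mul (2 * S)).sqrt (by positivity)
    refine this.congr_deriv ?_
    have := hrpos v hv
    simp only [hr] at this ⊢
    field_simp
  have hranti : StrictAntiOn r (Ioi b) := by
    intro v hv w hw hvw
    refine Real.sqrt_lt_sqrt (by have := H.K_pos hw; positivity) ?_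
    exact mul_lt_mul_of_pos_left (H.K_anti hv hw hvw) (by positivity)
  calc ENNReal.ofReal S * ∫⁻ u in Ioo μ b, ENNReal.ofReal (G (V u))
      ≤ ENNReal.ofReal S * ∫⁻ u in uv p f '' Ioo b v0, ENNReal.ofReal (G (V u)) := by
        gcongr
    _ = ENNReal.ofReal S * ∫⁻ v in Ioo b v0, ENNReal.ofReal |duv p f v| * ENNReal.ofReal (G (V (uv p f v))) := by
        rw [lintegral_image_eq_lintegral_abs_deriv_mul measurableSet_Ioo
          (fun v hv => (H.u_deriv hv.1).hasDerivWithinAt) (H.u_anti.injOn.mono Ioo_subset_Ioi_self)]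
    _ = ∫⁻ v in Ioo b v0, ENNReal.ofReal S * (ENNReal.ofReal |duv p f v| * ENNReal.ofReal (G (V (uv p f v)))) := by
        rw [lintegral_const_mul' _ _ ENNReal.ofReal_ne_top]
    _ = ∫⁻ v in Ioo b v0, ENNReal.ofReal (1 + ε) *
          (ENNReal.ofReal |S * (lamv p f v * duv p f v) / r v| * gaussianPDF 0 1 (r v)) := by
        refine setLIntegral_congr_fun measurableSet_Ioo fun v hv => ?_
        have hrp := hrpos v hv.1
        have hlp := H.lam_pos hv.1
        have hk := H.K_pos hv.1
        rw [hV v hv.1, gaussianPDF, ← ENNReal.ofReal_mul (abs_nonneg _), ← ENNReal.ofReal_mul hS.le,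
          ← ENNReal.ofReal_mul (abs_nonneg _), ← ENNReal.ofReal_mul (by linarith)]
        congr 1
        rw [abs_div, abs_mul, abs_mul, abs_of_pos hS, abs_of_pos hlp, abs_of_pos hrp, gaussianPDFReal]
        have e : (r v - 0) ^ 2 = 2 * S * Kv p f v := by
          rw [sub_zero]; exact Real.sq_sqrt (by positivity)
        rw [e]
        simp only [hG]
        have e2 : -(2 * S * Kv p f v) / (2 * ((1 : NNReal) : ℝ)) = -(S * Kv p f v) := by
          simp; ring
        rw [e2]
        have e3 : √(2 * π * ((1 : NNReal) : ℝ)) = √(2 * π) := by simp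
        rw [e3]
        change _ * (_ * (_ * (_ * (_ / r v)))) = _
        ring
    _ = ENNReal.ofReal (1 + ε) * ∫⁻ x in r '' Ioo b v0, gaussianPDF 0 1 x := by
        rw [lintegral_const_mul' _ _ ENNReal.ofReal_ne_top,
          lintegral_image_eq_lintegral_abs_deriv_mul measurableSet_Ioo
          (fun v hv => (hrd v hv.1).hasDerivWithinAt) (hranti.injOn.mono Ioo_subset_Ioi_self)]
    _ ≤ ENNReal.ofReal (1 + ε) * ∫⁻ x in {x | √(2 * S * Kv p f v0) ≤ x}, gaussianPDF 0 1 x := by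
        gcongr
        rintro _ ⟨v, hv, rfl⟩
        exact (hranti (show v ∈ Ioi b from hv.1) (show v0 ∈ Ioi b from hv0) hv.2).le
    _ = _ := by
        rw [gaussianReal_apply 0 (by norm_num)]

end PF

/-- **Upper bound on Dirichlet boundary-crossing probabilities** (Theorem 1, upper bound). -/
theorem dirichlet_crossing_upper
    (m : ℕ) (hm : 1 ≤ m) (b : ℝ) (hb : 0 < b)
    (f : Fin (m + 1) → ℝ) (hf : ∀ i, f i ∈ Set.Icc (0 : ℝ) b)
    (hf0 : f 0 = 0) (hfm : f (Fin.last m) = b)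
    (α : Fin (m + 1) → ℝ) (hα : ∀ i, 0 < α i)
    (ε : ℝ) (hε : ε ∈ Set.Ioo (0 : ℝ) 1)
    (hmin : c0 / ε ^ 2 ≤ min (α 0) (α (Fin.last m)))
    (μ : ℝ) (hμ : μ ∈ Set.Ioo (∑ ℓ, f ℓ * (α ℓ / ∑ j, α j)) b) :
    dirichlet m (Function.update α 0 (α 0 + 1)) {w | μ ≤ ∑ ℓ, f ℓ * w ℓ}
      ≤ ENNReal.ofReal (1 + ε) *
        gaussianReal 0 1
          {x | Real.sqrt (2 * (∑ j, α j) * Kinf (fun ℓ => α ℓ / ∑ j, α j) μ f) ≤ x} := by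
  have hS : 0 < ∑ j, α j := Finset.sum_pos (fun i _ => hα i) Finset.univ_nonempty
  set S := ∑ j, α j with hSd
  have H : PF (fun ℓ => α ℓ / S) f b :=
    { hp := fun i => div_pos (hα i) hS
      hs := by rw [← Finset.sum_div, ← hSd, div_self hS.ne']
      hb := hb
      hf := hf
      hf0 := hf0
      hfm := hfm }
  have h8 : 8 / ε ^ 2 ≤ min (α 0) (α (Fin.last m)) :=
    le_trans (div_le_div_of_nonneg_right c0_ge (sq_nonneg ε)) hmin
  obtain ⟨v0, hv0, hu0⟩ := H.u_surj hμ
  refine (dirichlet_ge_le hm _ f b hb hf hf0 hfm μ).trans ?_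
  refine (H.interval_bound α S hS (fun i => by field_simp) ε hε.1 hε.2
    (h8.trans (min_le_left _ _)) (h8.trans (min_le_right _ _)) μ hμ v0 hv0 hu0).trans ?_
  gcongr
  have := H.Kinf_le hv0
  rw [hu0] at this
  exact this

end
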